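/- Let H₀, …, H_{n−1} be real Hilbert spaces, H_n := H₀, and for i = 1, …, n let G_i : H₀ → H_i be bounded linear with G_n = id, A_i : H_i → Set H_i maximal monotone, B_i : H_i → H_i monotone and ℓ_i-Lipschitz, C_i : H_i → H_i β_i-cocoercive with β_i > 0, D_i : H_i → H_i monotone and continuously Fréchet differentiable with m_i-Lipschitz derivative, and T_i := A_i + B_i + C_i + D_i. Let I_D ⊂ {1, …, n} with m_i > 0 for i ∈ I_D and D_i = 0 for i ∉ I_D. Assume the extended-solution set S := {(z, w₁, …, w_{n−1}) : w_i ∈ T_i(G_i z), i = 1, …, n, with w_n := −Σ_{i<n} G_i* w_i} is nonempty. Fix parameters 0 < τ̲ < τ̄ < 2, 0 < θ̲ < θ̄ < 2, ρ̂ > 0, δ̂ > 0, γ > 0, and for i ∉ I_D bounds 0 < ρ̲_i ≤ ρ̄_i < 1/(1/(4β_i) + ℓ_i). Let sequences (z^k) in H₀, (w_i^k), (x_i^k), (y_i^k) in H_i, and (ρ_i^k) in (0,∞) satisfy, for every k and every i = 1, …, n, one of: (I) w_i^k ∈ T_i(G_i z^k), ρ_i^k = ρ̂, x_i^k = G_i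 z^k, y_i^k = w_i^k; (II) i ∈ I_D, G_i z^k + ρ_i^k w_i^k − ρ_i^k(B_i + C_i)(G_i z^k) − x_i^k ∈ ρ_i^k(A_i(x_i^k) + D_{i(G_i z^k)}(x_i^k)), y_i^k = (G_i z^k − x_i^k)/ρ_i^k + w_i^k + [B_i(x_i^k) − B_i(G_i z^k)] + [D_i(x_i^k) − D_{i(G_i z^k)}(x_i^k)], and θ̲ ≤ 4ℓ_i²(ρ_i^k)² + (β_i^{-1} + δ̂)ρ_i^k + (m_i ρ_i^k ‖x_i^k − G_i z^k‖)² ≤ θ̄; or (III) i ∉ I_D, ρ̲_i ≤ ρ_i^k ≤ ρ̄_i, G_i z^k + ρ_i^k w_i^k − ρ_i^k(B_i + C_i)(G_i z^k) − x_i^k ∈ ρ_i^k A_i(x_i^k), y_i^k = (G_i z^k − x_i^k)/ρ_i^k + w_i^k + [B_i(x_i^k) − B_i(G_i z^k)]. With y_n^k, x_n^k from i = n, let u_i^k := x_i^k − G_i x_n^k (i < n), v^k := Σ_{i<n} G_i* y_i^k + y_n^k, φ_k := ⟪z^k, v^k⟫ + Σ_{i<n} ⟪w_i^k, u_i^k⟫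 − Σ_{i=1}^n [⟪x_i^k, y_i^k⟫ + (1/(4β_i))‖x_i^k − G_i z^k‖²], π_k := γ^{-1}‖v^k‖² + Σ_{i<n}‖u_i^k‖², and suppose: if φ_k > 0 then z^{k+1} = z^k − γ^{-1}α_k v^k and w_i^{k+1} = w_i^k − α_k u_i^k (i < n) with α_k = τ_k φ_k/π_k for some τ_k ∈ [τ̲, τ̄]; otherwise z^{k+1} = z^k and w_i^{k+1} = w_i^k. Then (z^k, w₁^k, …, w_{n−1}^k) converges weakly to some (z̄, w̄₁, …, w̄_{n−1}) ∈ S, i.e. z^k ⇀ z̄, w_i^k ⇀ w̄_i for i < n, and w̄_i ∈ T_i(G_i z̄) for i = 1, …, n with w̄_n := −Σ_{i<n} G_i* w̄_i; moreover x_i^k ⇀ G_i z̄ and y_i^k ⇀ w̄_i for i = 1, …, n. -/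

import Mathlib

open scoped RealInnerProductSpace

open Filter

/-- Weak convergence of `x` to `a` along the filter `l`. -/
def WeakTendsto {ι E : Type*} [NormedAddCommGroup E] [InnerProductSpace ℝ E]
    (x : ι → E) (l : Filter ι) (a : E) : Prop :=
  ∀ h : E, Tendsto (fun k => ⟪h, x k⟫) l (nhds ⟪h, a⟫)

/-- Every bounded family in a Hilbert space converges weakly along every ultrafilter. -/
theorem exists_weakTendsto_of_bounded {ι E : Type*} [NormedAddCommGroup E]
    [InnerProductSpace ℝ E] [CompleteSpace E] (U : Ultrafilter ι) {x : ι → E} {R : ℝ}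
    (hx : ∀ᶠ k in (U : Filter ι), ‖x k‖ ≤ R) : ∃ a, WeakTendsto x U a := by
  set f : ι → WeakDual ℝ E := fun k =>
    StrongDual.toWeakDual (InnerProductSpace.toDual ℝ E (x k)) with hf
  have hmem : ∀ᶠ k in (U : Filter ι),
      f k ∈ WeakDual.toStrongDual ⁻¹' Metric.closedBall (0 : StrongDual ℝ E) R := by
    filter_upwards [hx] with k hk
    simpa [hf] using hk
  obtain ⟨g, -, hg⟩ := (WeakDual.isCompact_closedBall (0 : StrongDual ℝ E) R).ultrafilter_le_nhds
    (U.map f) (le_principal_iff.2 hmem)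
  refine ⟨(InnerProductSpace.toDual ℝ E).symm (WeakDual.toStrongDual g), fun h => ?_⟩
  have h1 : Tendsto (fun k => f k h) U (nhds (g h)) :=
    ((WeakDual.eval_continuous h).tendsto g).comp hg
  have h2 : ⟪h, (InnerProductSpace.toDual ℝ E).symm (WeakDual.toStrongDual g)⟫ = g h := by
    rw [real_inner_comm, InnerProductSpace.toDual_symm_apply]
    rfl
  rw [h2]
  refine h1.congr fun k => ?_
  rw [real_inner_comm]
  rfl

/-- Closed balls are weakly closed. -/
theorem WeakTendsto.norm_sub_le {ι E : Type*} [NormedAddCommGroup E] [InnerProductSpace ℝ E]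
    {x : ι → E} {l : Filter ι} [l.NeBot] {a c : E} {R : ℝ} (h : WeakTendsto x l a)
    (hx : ∀ᶠ k in l, ‖x k - c‖ ≤ R) : ‖a - c‖ ≤ R := by
  have h1 : Tendsto (fun k => ⟪a - c, x k - c⟫) l (nhds ⟪a - c, a - c⟫) := by
    simpa only [inner_sub_right] using (h (a - c)).sub_const _
  have h2 : ⟪a - c, a - c⟫ ≤ ‖a - c‖ * R := by
    refine le_of_tendsto h1 ?_
    filter_upwards [hx] with k hk
    exact (real_inner_le_norm _ _).trans (by gcongr)
  rw [real_inner_self_eq_norm_mul_norm] at h2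
  by_contra! hlt
  obtain ⟨k, hk⟩ := hx.exists
  nlinarith [norm_nonneg (x k - c)]

theorem inner_sub_add_eq_norm_sq {E : Type*} [NormedAddCommGroup E] [InnerProductSpace ℝ E]
    (x a b : E) : ⟪x - a, x + b⟫ = ‖x - (1 / 2 : ℝ) • (a - b)‖ ^ 2 - (‖a + b‖ / 2) ^ 2 := by
  rw [div_pow, ← real_inner_self_eq_norm_sq, ← real_inner_self_eq_norm_sq]
  simp only [inner_sub_left, inner_sub_right, inner_add_left, inner_add_right, inner_smul_left,
    inner_smul_right, conj_trivial, real_inner_comm x a, real_inner_comm x b,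
    real_inner_comm a b]
  ring

/-- Finite version of Minty's theorem. -/
theorem exists_forall_inner_sub_add_nonpos {ι E : Type*} [Fintype ι] [NormedAddCommGroup E]
    [InnerProductSpace ℝ E] (a b : ι → E) (hab : ∀ i j, 0 ≤ ⟪a i - a j, b i - b j⟫) :
    ∃ x, ∀ j, ⟪x - a j, x + b j⟫ ≤ 0 := by
  classical
  rcases isEmpty_or_nonempty ι with hι | hι
  · exact ⟨0, fun j => isEmptyElim j⟩
  set c : ι → E := fun j => (1 / 2 : ℝ) • (a j - b j) with hc
  set H : (ι → ℝ) → ℝ := fun t => ‖∑ j, t j • c j‖ ^ 2 + ∑ j, t j * ⟪a j, b j⟫ with hH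
  have hHc : Continuous H := by fun_prop
  obtain ⟨i₀⟩ := hι
  obtain ⟨t, ht, hmin⟩ := (isCompact_stdSimplex ℝ ι).exists_isMinOn
    ⟨_, single_mem_stdSimplex ℝ i₀⟩ hHc.continuousOn
  have hsum : ∑ i, t i = 1 := ht.2
  set x : E := ∑ j, t j • c j with hx
  set S : ℝ := ∑ j, t j * ⟪a j, b j⟫ with hS
  have hval : 0 ≤ ‖x‖ ^ 2 + S := by
    set p : E := ∑ j, t j • a j with hp
    set q : E := ∑ j, t j • b j with hq
    have hxpq : x = (1 / 2 : ℝ) • (p - q) := by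
      rw [hx, hp, hq, ← Finset.sum_sub_distrib, Finset.smul_sum]
      refine Finset.sum_congr rfl fun j _ => ?_
      rw [hc, ← smul_sub, smul_comm]
    have h1 : 0 ≤ ∑ i, t i * ∑ j, t j * ⟪a i - a j, b i - b j⟫ :=
      Finset.sum_nonneg fun i _ => mul_nonneg (ht.1 i) <|
        Finset.sum_nonneg fun j _ => mul_nonneg (ht.1 j) (hab i j)
    have h2 : ∀ i, ∑ j, t j * ⟪a i - a j, b i - b j⟫ =
        ⟪a i, b i⟫ - ⟪a i, q⟫ - ⟪p, b i⟫ + S := by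
      intro i
      have e1 : ⟪a i, q⟫ = ∑ j, t j * ⟪a i, b j⟫ := by
        rw [hq, inner_sum]; simp only [inner_smul_right]
      have e2 : ⟪p, b i⟫ = ∑ j, t j * ⟪a j, b i⟫ := by
        rw [hp, sum_inner]; simp only [inner_smul_left, conj_trivial]
      have e3 : ⟪a i, b i⟫ = ∑ j, t j * ⟪a i, b i⟫ := by
        rw [← Finset.sum_mul, hsum, one_mul]
      rw [e1, e2, e3, hS, ← Finset.sum_sub_distrib, ← Finset.sum_sub_distrib,
        ← Finset.sum_add_distrib]
      refine Finset.sum_congr rfl fun j _ => ?_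
      simp only [inner_sub_left, inner_sub_right]
      ring
    have h3 : ∑ i, t i * ∑ j, t j * ⟪a i - a j, b i - b j⟫ = 2 * S - 2 * ⟪p, q⟫ := by
      have e1 : ⟪p, q⟫ = ∑ i, t i * ⟪a i, q⟫ := by
        rw [hp, sum_inner]; simp only [inner_smul_left, conj_trivial]
      have e2 : ⟪p, q⟫ = ∑ i, t i * ⟪p, b i⟫ := by
        rw [hq, inner_sum]; simp only [inner_smul_right]
      have e3 : S = ∑ i, t i * S := by rw [← Finset.sum_mul, hsum, one_mul]
      simp only [h2, mul_add, mul_sub, Finset.sum_add_distrib, Finset.sum_sub_distrib]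
      rw [← e1, ← e2, ← e3, ← hS]
      ring
    have h4 := inner_sub_add_eq_norm_sq (0 : E) p q
    rw [zero_sub, zero_add, zero_sub, norm_neg, ← hxpq, inner_neg_left] at h4
    nlinarith [sq_nonneg (‖p + q‖ / 2)]
  refine ⟨x, fun j => ?_⟩
  have hder : ∀ r : ℝ, 0 < r → r ≤ 1 →
      0 ≤ (2 * ⟪x, c j - x⟫ + ⟪a j, b j⟫ - S) + r * ‖c j - x‖ ^ 2 := by
    intro r hr hr1
    have hmem : (1 - r) • t + r • (Pi.single j 1 : ι → ℝ) ∈ stdSimplex ℝ ι :=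
      convex_stdSimplex ℝ ι ht (single_mem_stdSimplex ℝ j) (by linarith) hr.le (by ring)
    have h1 : H t ≤ H _ := hmin hmem
    have e1 : ∑ i, ((1 - r) • t + r • (Pi.single j 1 : ι → ℝ)) i • c i = x + r • (c j - x) := by
      simp only [Pi.add_apply, Pi.smul_apply, smul_eq_mul, add_smul, mul_smul,
        Finset.sum_add_distrib, ← Finset.smul_sum]
      rw [← hx]
      simp only [Pi.single_apply, ite_smul, one_smul, zero_smul, Finset.sum_ite_eq',
        Finset.mem_univ, if_true]
      module
    have e2 : ∑ i, ((1 - r) • t + r • (Pi.single j 1 : ι → ℝ)) i * ⟪a i, b i⟫ =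
        S + r * (⟪a j, b j⟫ - S) := by
      simp only [Pi.add_apply, Pi.smul_apply, smul_eq_mul, add_mul, mul_assoc,
        Finset.sum_add_distrib, ← Finset.mul_sum]
      rw [← hS]
      simp only [Pi.single_apply, ite_mul, one_mul, zero_mul, Finset.sum_ite_eq',
        Finset.mem_univ, if_true]
      ring
    simp only [hH] at h1
    rw [e1, e2, ← hx, ← hS, norm_add_sq_real, inner_smul_right, norm_smul, mul_pow,
      Real.norm_eq_abs, sq_abs] at h1
    have h2 : 0 ≤ r * ((2 * ⟪x, c j - x⟫ + ⟪a j, b j⟫ - S) + r * ‖c j - x‖ ^ 2) := by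
      nlinarith
    exact nonneg_of_mul_nonneg_right h2 hr
  have hder0 : 0 ≤ 2 * ⟪x, c j - x⟫ + ⟪a j, b j⟫ - S := by
    have hlim : Tendsto (fun r : ℝ => (2 * ⟪x, c j - x⟫ + ⟪a j, b j⟫ - S) + r * ‖c j - x‖ ^ 2)
        (nhdsWithin 0 (Set.Ioi 0)) (nhds ((2 * ⟪x, c j - x⟫ + ⟪a j, b j⟫ - S) + 0 * ‖c j - x‖ ^ 2)) := by
      refine Tendsto.mono_left ?_ nhdsWithin_le_nhds
      exact Continuous.tendsto (by fun_prop) 0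
    have := ge_of_tendsto hlim (b := 0) (by
      filter_upwards [Ioo_mem_nhdsGT (zero_lt_one : (0 : ℝ) < 1)] with r hr
      exact hder r hr.1 hr.2.le)
    simpa using this
  have e : 2 * ⟪x, c j - x⟫ = ⟪x, a j⟫ - ⟪x, b j⟫ - 2 * ‖x‖ ^ 2 := by
    simp only [hc, inner_sub_right, inner_smul_right, real_inner_self_eq_norm_sq]
    ring
  simp only [inner_sub_left, inner_add_right, real_inner_self_eq_norm_sq]
  rw [real_inner_comm x (a j)]
  linarith

/-- Debrunner–Flor/Minty: a monotone set has a point monotonically related to it on the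
antidiagonal. -/
theorem exists_inner_sub_add_nonpos_of_monotone {E : Type*} [NormedAddCommGroup E]
    [InnerProductSpace ℝ E] [CompleteSpace E] (M : Set (E × E))
    (hM : ∀ p ∈ M, ∀ q ∈ M, 0 ≤ ⟪p.1 - q.1, p.2 - q.2⟫) :
    ∃ x, ∀ p ∈ M, ⟪x - p.1, x + p.2⟫ ≤ 0 := by
  rcases M.eq_empty_or_nonempty with rfl | ⟨p₀, hp₀⟩
  · exact ⟨0, by simp⟩
  have hball : ∀ x (p : E × E), ⟪x - p.1, x + p.2⟫ ≤ 0 ↔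
      ‖x - (1 / 2 : ℝ) • (p.1 - p.2)‖ ≤ ‖p.1 + p.2‖ / 2 := by
    intro x p
    rw [inner_sub_add_eq_norm_sq, sub_nonpos, sq_le_sq₀ (norm_nonneg _) (by positivity)]
  have hfin : ∀ s : Finset M, ∃ x, ∀ p ∈ s, ⟪x - p.1.1, x + p.1.2⟫ ≤ 0 := by
    intro s
    obtain ⟨x, hx⟩ := exists_forall_inner_sub_add_nonpos (fun p : s => p.1.1.1)
      (fun p : s => p.1.1.2) (fun p q => hM _ p.1.2 _ q.1.2)
    exact ⟨x, fun p hp => hx ⟨p, hp⟩⟩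
  choose x hx using hfin
  have hev : ∀ p : M, ∀ᶠ s in ((Ultrafilter.of atTop : Ultrafilter (Finset M)) : Filter _),
      ‖x s - (1 / 2 : ℝ) • (p.1.1 - p.1.2)‖ ≤ ‖p.1.1 + p.1.2‖ / 2 := by
    intro p
    refine Ultrafilter.of_le atTop ?_
    filter_upwards [eventually_ge_atTop {p}] with s hs
    exact (hball _ _).1 (hx s p (hs (Finset.mem_singleton_self p)))
  obtain ⟨y, hy⟩ := exists_weakTendsto_of_bounded (Ultrafilter.of atTop) (x := x)
    (R := ‖p₀.1 + p₀.2‖ / 2 + ‖(1 / 2 : ℝ) • (p₀.1 - p₀.2)‖) (by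
      filter_upwards [hev ⟨p₀, hp₀⟩] with s hs
      have := norm_le_norm_sub_add (x s) ((1 / 2 : ℝ) • (p₀.1 - p₀.2))
      exact this.trans (by gcongr))
  exact ⟨y, fun p hp => (hball _ _).2 (hy.norm_sub_le (hev ⟨p, hp⟩))⟩

/-- Minty's theorem: resolvents of a maximal monotone operator are defined everywhere. -/
theorem exists_smul_sub_mem_of_maximal_monotone {E : Type*} [NormedAddCommGroup E]
    [InnerProductSpace ℝ E] [CompleteSpace E] {A : E → Set E}
    (hmono : ∀ x y u v, u ∈ A x → v ∈ A y → 0 ≤ ⟪x - y, u - v⟫)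
    (hmax : ∀ p q, (∀ r s, s ∈ A r → 0 ≤ ⟪p - r, q - s⟫) → q ∈ A p)
    {μ : ℝ} (hμ : 0 < μ) (y : E) : ∃ a, μ • (y - a) ∈ A a := by
  obtain ⟨x, hx⟩ := exists_inner_sub_add_nonpos_of_monotone
    {p : E × E | μ • p.2 ∈ A (p.1 + y)} (by
      intro p hp q hq
      have h := hmono _ _ _ _ hp hq
      rw [add_sub_add_right_eq_sub, ← smul_sub, inner_smul_right] at h
      exact nonneg_of_mul_nonneg_right h hμ)
  refine ⟨x + y, hmax _ _ fun r s hs => ?_⟩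
  have h := hx (r - y, μ⁻¹ • s) (by simpa [smul_smul, hμ.ne'] using hs)
  have e : ⟪x + y - r, μ • (y - (x + y)) - s⟫ = -μ * ⟪x - (r - y), x + μ⁻¹ • s⟫ := by
    rw [neg_mul, ← inner_smul_right, ← inner_neg_right, smul_add, smul_smul,
      mul_inv_cancel₀ hμ.ne', one_smul]
    congr 1 <;> module
  rw [e]
  nlinarith

/-- The sum of a maximal monotone operator and a map that is Lipschitz on bounded sets has a
resolvent at every point, for a suitable (small) parameter. -/
theorem exists_add_smul_sub_mem_of_lipschitzOnBalls {E : Type*} [NormedAddCommGroup E]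
    [InnerProductSpace ℝ E] [CompleteSpace E] {A : E → Set E}
    (hmono : ∀ x y u v, u ∈ A x → v ∈ A y → 0 ≤ ⟪x - y, u - v⟫)
    (hmax : ∀ p q, (∀ r s, s ∈ A r → 0 ≤ ⟪p - r, q - s⟫) → q ∈ A p)
    {F : E → E}
    (hF : ∀ p R, ∃ L, ∀ x ∈ Metric.closedBall p R, ∀ y ∈ Metric.closedBall p R,
      ‖F x - F y‖ ≤ L * ‖x - y‖) (p q : E) :
    ∃ μ : ℝ, 0 < μ ∧ ∃ a, q + μ • (p - a) - F a ∈ A a := by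
  obtain ⟨a₀, b₀, hb₀⟩ : ∃ a₀ b₀, b₀ ∈ A a₀ := by
    by_contra! h
    exact h 0 0 (hmax 0 0 fun r s hs => absurd hs (h r s))
  set R : ℝ := 4 * ‖a₀ - p‖ + 2 with hR
  have hR0 : 0 < R := by positivity
  obtain ⟨L, hL⟩ := hF p R
  set N : ℝ := ‖q - F p - b₀‖ with hN
  set μ : ℝ := 2 * |L| + N + 1 with hμdef
  have hμ : 0 < μ := by positivity
  choose J hJ using fun y => exists_smul_sub_mem_of_maximal_monotone hmono hmax hμ y
  have hres : ∀ y a, μ • (y - a) ∈ A a → ∀ y' a', μ • (y' - a') ∈ A a' →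
      ‖a - a'‖ ≤ ‖y - y'‖ := by
    intro y a ha y' a' ha'
    have h := hmono _ _ _ _ ha ha'
    rw [← smul_sub, inner_smul_right] at h
    have h1 := nonneg_of_mul_nonneg_right h hμ
    have e : y - a - (y' - a') = (y - y') - (a - a') := by abel
    rw [e, inner_sub_right, real_inner_self_eq_norm_sq] at h1
    have h2 := real_inner_le_norm (a - a') (y - y')
    by_contra! hlt
    nlinarith [norm_nonneg (y - y')]
  set g : E → E := fun a => J (p + μ⁻¹ • (q - F a)) with hg
  have hgl : ∀ x ∈ Metric.closedBall p R, ∀ y ∈ Metric.closedBall p R,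
      ‖g x - g y‖ ≤ 1 / 2 * ‖x - y‖ := by
    intro x hx y hy
    refine (hres _ _ (hJ _) _ _ (hJ _)).trans ?_
    have e : p + μ⁻¹ • (q - F x) - (p + μ⁻¹ • (q - F y)) = μ⁻¹ • (F y - F x) := by module
    rw [e, norm_smul, Real.norm_of_nonneg (by positivity), norm_sub_rev, inv_mul_le_iff₀ hμ]
    refine (hL x hx y hy).trans ?_
    have : L ≤ μ * (1 / 2) := by
      have := le_abs_self L
      have : 0 ≤ N := norm_nonneg _
      rw [hμdef]; linarith
    rw [← mul_assoc]
    gcongr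
  have hpR : p ∈ Metric.closedBall p R := Metric.mem_closedBall_self hR0.le
  have hgp : ‖g p - p‖ ≤ R / 2 := by
    have h1 : ‖g p - a₀‖ ≤ ‖p + μ⁻¹ • (q - F p) - (a₀ + μ⁻¹ • b₀)‖ :=
      hres _ _ (hJ _) _ _ (by simpa [smul_smul, hμ.ne'] using hb₀)
    have e : p + μ⁻¹ • (q - F p) - (a₀ + μ⁻¹ • b₀) = (p - a₀) + μ⁻¹ • (q - F p - b₀) := by
      module
    have h2 : ‖μ⁻¹ • (q - F p - b₀)‖ ≤ 1 := by
      rw [norm_smul, Real.norm_of_nonneg (by positivity), inv_mul_le_iff₀ hμ, ← hN, hμdef]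
      have := abs_nonneg L
      linarith
    rw [e] at h1
    have h3 := norm_add_le (p - a₀) (μ⁻¹ • (q - F p - b₀))
    have h4 := norm_sub_le_norm_sub_add_norm_sub (g p) a₀ p
    rw [norm_sub_rev p a₀] at h3
    rw [hR]; linarith
  have hmaps : Set.MapsTo g (Metric.closedBall p R) (Metric.closedBall p R) := by
    intro x hx
    have h1 := hgl x hx p hpR
    rw [Metric.mem_closedBall, dist_eq_norm] at hx ⊢
    have h4 := norm_sub_le_norm_sub_add_norm_sub (g x) (g p) p
    linarith
  have hcontr : ContractingWith (1 / 2) (hmaps.restrict g _ _) := by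
    refine ⟨by rw [← NNReal.coe_lt_coe]; norm_num, LipschitzWith.of_dist_le_mul fun x y => ?_⟩
    have := hgl x x.2 y y.2
    simpa [Subtype.dist_eq, dist_eq_norm] using this
  obtain ⟨a, -, ha, -⟩ := hcontr.exists_fixedPoint' Metric.isClosed_closedBall.isComplete hmaps
    hpR (edist_ne_top _ _)
  refine ⟨μ, hμ, a, ?_⟩
  have h := hJ (p + μ⁻¹ • (q - F a))
  have hfix : J (p + μ⁻¹ • (q - F a)) = a := ha
  rw [hfix] at h
  convert h using 1
  rw [add_sub_right_comm p, smul_add, smul_smul, mul_inv_cancel₀ hμ.ne', one_smul]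
  abel

/-- First-order Taylor estimate for a map with Lipschitz derivative. -/
theorem norm_sub_linearization_le {E : Type*} [NormedAddCommGroup E] [NormedSpace ℝ E]
    {D : E → E} {D' : E → E →L[ℝ] E} (hD : ∀ x, HasFDerivAt D (D' x) x) {c : ℝ}
    (hlip : ∀ x y, ‖D' x - D' y‖ ≤ c * ‖x - y‖) (p x : E) :
    ‖D x - (D p + D' p (x - p))‖ ≤ c / 2 * ‖x - p‖ ^ 2 := by
  set d := x - p with hd
  have hf : ∀ t : ℝ, HasDerivAt (fun t : ℝ => D (p + t • d) - (D p + t • D' p d))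
      (D' (p + t • d) d - D' p d) t := by
    intro t
    have h1 : HasDerivAt (fun t : ℝ => p + t • d) d t := by
      simpa using ((hasDerivAt_id t).smul_const d).const_add p
    have h2 : HasDerivAt (fun t : ℝ => D p + t • D' p d) (D' p d) t := by
      simpa using ((hasDerivAt_id t).smul_const (D' p d)).const_add (D p)
    exact ((hD _).comp_hasDerivAt t h1).sub h2
  have hB : ∀ t : ℝ, HasDerivAt (fun t : ℝ => c / 2 * ‖d‖ ^ 2 * t ^ 2) (c * ‖d‖ ^ 2 * t) t := by
    intro t
    refine ((hasDerivAt_pow 2 t).const_mul (c / 2 * ‖d‖ ^ 2)).congr_deriv ?_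
    push_cast
    ring
  have h := image_norm_le_of_norm_deriv_right_le_deriv_boundary (a := (0 : ℝ)) (b := 1)
    (fun t _ => (hf t).continuousAt.continuousWithinAt) (fun t _ => (hf t).hasDerivWithinAt)
    (by simp) hB (fun t ht => by
      rw [← sub_apply]
      refine (ContinuousLinearMap.le_opNorm _ _).trans ?_
      have := hlip (p + t • d) p
      rw [add_sub_cancel_left, norm_smul, Real.norm_of_nonneg ht.1] at this
      calc _ ≤ c * (t * ‖d‖) * ‖d‖ := by gcongr
        _ = _ := by ring) (Set.right_mem_Icc.2 zero_le_one)
  simpa [hd] using h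

/-- A map with Lipschitz derivative is Lipschitz on balls. -/
theorem exists_lipschitz_on_closedBall {E : Type*} [NormedAddCommGroup E] [NormedSpace ℝ E]
    {D : E → E} {D' : E → E →L[ℝ] E} (hD : ∀ x, HasFDerivAt D (D' x) x) {c : ℝ} (hc : 0 ≤ c)
    (hlip : ∀ x y, ‖D' x - D' y‖ ≤ c * ‖x - y‖) (p : E) (R : ℝ) :
    ∃ L, ∀ x ∈ Metric.closedBall p R, ∀ y ∈ Metric.closedBall p R,
      ‖D x - D y‖ ≤ L * ‖x - y‖ := by
  refine ⟨‖D' p‖ + c * R, fun x hx y hy => ?_⟩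
  refine (convex_closedBall p R).norm_image_sub_le_of_norm_hasFDerivWithin_le
    (fun z _ => (hD z).hasFDerivWithinAt) (fun z hz => ?_) hy hx
  have h1 := hlip z p
  have h2 := norm_le_norm_add_norm_sub (D' p) (D' z)
  rw [norm_sub_rev] at h2
  rw [Metric.mem_closedBall, dist_eq_norm] at hz
  nlinarith

theorem norm_sub_le_of_cocoercive {E : Type*} [NormedAddCommGroup E] [InnerProductSpace ℝ E]
    {C : E → E} {β : ℝ} (hβ : 0 < β)
    (hC : ∀ x y, β * ‖C x - C y‖ ^ 2 ≤ ⟪x - y, C x - C y⟫) (x y : E) :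
    ‖C x - C y‖ ≤ β⁻¹ * ‖x - y‖ := by
  rw [inv_mul_eq_div, le_div_iff₀ hβ]
  have h1 := hC x y
  have h2 := real_inner_le_norm (x - y) (C x - C y)
  by_contra! h
  nlinarith [norm_nonneg (C x - C y), norm_nonneg (x - y)]

theorem exists_lipschitz_on_closedBall_add {E : Type*} [NormedAddCommGroup E]
    [InnerProductSpace ℝ E] {B C D : E → E} {D' : E → E →L[ℝ] E} {ℓ β c : ℝ}
    (hB : ∀ x y, ‖B x - B y‖ ≤ ℓ * ‖x - y‖) (hβ : 0 < β)
    (hC : ∀ x y, β * ‖C x - C y‖ ^ 2 ≤ ⟪x - y, C x - C y⟫)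
    (hD : ∀ x, HasFDerivAt D (D' x) x) (hc : 0 ≤ c)
    (hlip : ∀ x y, ‖D' x - D' y‖ ≤ c * ‖x - y‖) (p : E) (R : ℝ) :
    ∃ L, ∀ x ∈ Metric.closedBall p R, ∀ y ∈ Metric.closedBall p R,
      ‖(B x + C x + D x) - (B y + C y + D y)‖ ≤ L * ‖x - y‖ := by
  obtain ⟨L, hL⟩ := exists_lipschitz_on_closedBall hD hc hlip p R
  refine ⟨ℓ + β⁻¹ + L, fun x hx y hy => ?_⟩
  rw [show (B x + C x + D x) - (B y + C y + D y) = (B x - B y) + (C x - C y) + (D x - D y) by abel,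
    add_mul, add_mul]
  exact norm_add₃_le.trans
    (add_le_add_three (hB x y) (norm_sub_le_of_cocoercive hβ hC x y) (hL x hx y hy))

/-- The value at a graph point of the separating affine function of one block is nonpositive. -/
theorem inner_sub_le_of_forward_mem {E : Type*} [NormedAddCommGroup E] [InnerProductSpace ℝ E]
    {A : E → Set E} (hA : ∀ x y u v, u ∈ A x → v ∈ A y → 0 ≤ ⟪x - y, u - v⟫)
    {B C D : E → E} {β : ℝ} (hB : ∀ x y, 0 ≤ ⟪x - y, B x - B y⟫) (hβ : 0 < β)
    (hC : ∀ x y, β * ‖C x - C y‖ ^ 2 ≤ ⟪x - y, C x - C y⟫)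
    (hD : ∀ x y, 0 ≤ ⟪x - y, D x - D y⟫) {p x y ps qs : E}
    (hy : y - B x - C p - D x ∈ A x) (hs : qs - B ps - C ps - D ps ∈ A ps) :
    ⟪ps - x, y - qs⟫ ≤ 1 / (4 * β) * ‖x - p‖ ^ 2 := by
  have h1 := hA _ _ _ _ hs hy
  have h2 := hB ps x
  have h3 := hD ps x
  have h4 := hC ps p
  have h5 : -(‖p - x‖ * ‖C ps - C p‖) ≤ ⟪p - x, C ps - C p⟫ :=
    (abs_le.1 (abs_real_inner_le_norm _ _)).1
  have h6 : β * (‖C ps - C p‖ - ‖x - p‖ / (2 * β)) ^ 2 = β * ‖C ps - C p‖ ^ 2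
      - ‖x - p‖ * ‖C ps - C p‖ + 1 / (4 * β) * ‖x - p‖ ^ 2 := by
    field_simp; ring
  have h7 : 0 ≤ β * (‖C ps - C p‖ - ‖x - p‖ / (2 * β)) ^ 2 := by positivity
  rw [norm_sub_rev p x] at h5
  have e : ⟪ps - x, qs - B ps - C ps - D ps - (y - B x - C p - D x)⟫ =
      -⟪ps - x, y - qs⟫ - ⟪ps - x, B ps - B x⟫ - ⟪ps - x, D ps - D x⟫
        - ⟪ps - p, C ps - C p⟫ - ⟪p - x, C ps - C p⟫ := by
    simp only [inner_sub_left, inner_sub_right]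
    ring
  linarith

/-- Scalar estimate: a coercivity bound on a block gives control of its residuals. -/
theorem residual_bounds_of_coercivity {c R M ρ r κ f N : ℝ} (hc : 0 < c) (hM : 0 ≤ M)
    (hρ : 0 < ρ) (hρR : ρ ≤ R) (hr : 0 ≤ r) (hκ : ρ * κ ≤ 1 - c)
    (hf : r ^ 2 * (ρ⁻¹ - κ) ≤ f) (hN0 : 0 ≤ N) (hN : N ≤ r * (ρ⁻¹ + κ))
    (hinv : ρ⁻¹ ≤ M * (1 + r ^ 2 * ρ⁻¹)) :
    0 ≤ f ∧ r ^ 2 ≤ (R / c + 4 * M / c * (1 + 1 / c)) * (f * (1 + f)) ∧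
      N ^ 2 ≤ (R / c + 4 * M / c * (1 + 1 / c)) * (f * (1 + f)) := by
  have hi : 0 < ρ⁻¹ := inv_pos.2 hρ
  have hρi : ρ * ρ⁻¹ = 1 := mul_inv_cancel₀ hρ.ne'
  have hκ' : κ ≤ (1 - c) * ρ⁻¹ := by
    rw [← div_eq_mul_inv, le_div_iff₀ hρ, mul_comm]; exact hκ
  set s := r ^ 2 * ρ⁻¹ with hs
  have hs0 : 0 ≤ s := by positivity
  have hsf : c * s ≤ f := by
    refine le_trans ?_ hf
    have : c * ρ⁻¹ ≤ ρ⁻¹ - κ := by linarith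
    calc c * s = r ^ 2 * (c * ρ⁻¹) := by rw [hs]; ring
      _ ≤ _ := by gcongr
  have hsf' : s ≤ f / c := by rw [le_div_iff₀ hc]; linarith
  have hf0 : 0 ≤ f := by nlinarith
  have hR : 0 < R := hρ.trans_le hρR
  have hr2 : r ^ 2 ≤ R * (f / c) := by
    have e : r ^ 2 = ρ * s := by rw [hs, mul_left_comm, hρi, mul_one]
    rw [e]
    gcongr
  have hN1 : N ≤ r * (2 * ρ⁻¹) := by
    refine hN.trans ?_
    gcongr
    nlinarith
  have hN2 : N ^ 2 ≤ 4 * (f / c) * (M * (1 + f / c)) := by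
    calc N ^ 2 ≤ (r * (2 * ρ⁻¹)) ^ 2 := by gcongr
      _ = 4 * s * ρ⁻¹ := by rw [hs]; ring
      _ ≤ 4 * (f / c) * (M * (1 + f / c)) := by
        refine mul_le_mul (by gcongr) (hinv.trans (by gcongr)) hi.le (by positivity)
  refine ⟨hf0, hr2.trans ?_, hN2.trans ?_⟩
  · have : R * (f / c) = R / c * f := by ring
    rw [this, add_mul]
    have h1 : 0 ≤ 4 * M / c * (1 + 1 / c) * (f * (1 + f)) := by positivity
    have h2 : R / c * f ≤ R / c * (f * (1 + f)) := by gcongr; nlinarith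
    linarith
  · have h1 : 0 ≤ R / c * (f * (1 + f)) := by positivity
    have h2 : 4 * (f / c) * (M * (1 + f / c)) = 4 * M / c * (f * (1 + 1 / c * f)) := by ring
    have h3 : 1 + 1 / c * f ≤ (1 + 1 / c) * (1 + f) := by
      have : 0 ≤ 1 / c := by positivity
      nlinarith
    rw [h2, add_mul]
    have h4 : 4 * M / c * (f * (1 + 1 / c * f)) ≤
        4 * M / c * (f * ((1 + 1 / c) * (1 + f))) := by gcongr
    linarith [show 4 * M / c * (f * ((1 + 1 / c) * (1 + f))) =
      4 * M / c * (1 + 1 / c) * (f * (1 + f)) by ring]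

/-- Residual bounds for a step with displacement `p - x` and error terms of relative size `κ₀`. -/
theorem residual_bounds_of_step {E : Type*} [NormedAddCommGroup E] [InnerProductSpace ℝ E]
    {c R M ρ κ₀ β : ℝ} {p x w y e : E} (hβ : 0 < β) (hc : 0 < c) (hM : 0 ≤ M)
    (hρ : 0 < ρ) (hρR : ρ ≤ R) (hy : y = ρ⁻¹ • (p - x) + w + e) (he : ‖e‖ ≤ κ₀ * ‖x - p‖)
    (hκ : ρ * (κ₀ + 1 / (4 * β)) ≤ 1 - c) (hinv : ρ⁻¹ ≤ M * (1 + ‖x - p‖ ^ 2 * ρ⁻¹)) :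
    0 ≤ ⟪p - x, y - w⟫ - 1 / (4 * β) * ‖x - p‖ ^ 2 ∧
      ‖x - p‖ ^ 2 ≤ (R / c + 4 * M / c * (1 + 1 / c)) *
        ((⟪p - x, y - w⟫ - 1 / (4 * β) * ‖x - p‖ ^ 2) *
          (1 + (⟪p - x, y - w⟫ - 1 / (4 * β) * ‖x - p‖ ^ 2))) ∧
      ‖y - w‖ ^ 2 ≤ (R / c + 4 * M / c * (1 + 1 / c)) *
        ((⟪p - x, y - w⟫ - 1 / (4 * β) * ‖x - p‖ ^ 2) *
          (1 + (⟪p - x, y - w⟫ - 1 / (4 * β) * ‖x - p‖ ^ 2))) := by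
  have hyw : y - w = ρ⁻¹ • (p - x) + e := by rw [hy]; abel
  have hi : 0 < ρ⁻¹ := inv_pos.2 hρ
  refine residual_bounds_of_coercivity hc hM hρ hρR (norm_nonneg _) hκ ?_ (norm_nonneg _) ?_ hinv
  · rw [hyw, inner_add_right, inner_smul_right, real_inner_self_eq_norm_sq, norm_sub_rev p x]
    have h1 : -(‖p - x‖ * ‖e‖) ≤ ⟪p - x, e⟫ := (abs_le.1 (abs_real_inner_le_norm _ _)).1
    rw [norm_sub_rev p x] at h1
    nlinarith [norm_nonneg (x - p)]
  · rw [hyw]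
    refine (norm_add_le _ _).trans ?_
    rw [norm_smul, Real.norm_of_nonneg hi.le, norm_sub_rev p x]
    have : 0 ≤ 1 / (4 * β) := by positivity
    nlinarith [norm_nonneg (x - p)]

/-- Every step of type (I), (II) or (III) has its residuals controlled by its contribution to the
separating affine function. -/
theorem exists_residual_bounds {E : Type*} [NormedAddCommGroup E] [InnerProductSpace ℝ E]
    {A : E → Set E} {B C D : E → E} {D' : E → E →L[ℝ] E} {ℓ β c : ℝ} (hℓ : 0 ≤ ℓ)
    (hB : ∀ x y, ‖B x - B y‖ ≤ ℓ * ‖x - y‖) (hβ : 0 < β)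
    (hD : ∀ x, HasFDerivAt D (D' x) x)
    (hlip : ∀ x y, ‖D' x - D' y‖ ≤ c * ‖x - y‖) {P : Prop}
    {θlo θhi δ ρhat ρlo ρhi : ℝ} (hθ0 : 0 < θlo) (hθ2 : θhi < 2) (hδ : 0 < δ)
    (hρ : ¬P → 0 < ρlo ∧ ρlo ≤ ρhi ∧ ρhi < 1 / (1 / (4 * β) + ℓ)) :
    ∃ K : ℝ, 0 ≤ K ∧ ∀ p w x y ρ, 0 < ρ →
      ((w - B p - C p - D p ∈ A p ∧ ρ = ρhat ∧ x = p ∧ y = w) ∨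
      (P ∧ (∃ a ∈ A x, p + ρ • w - ρ • (B p + C p) - x = ρ • (a + (D p + D' p (x - p)))) ∧
        y = ρ⁻¹ • (p - x) + w + (B x - B p) + (D x - (D p + D' p (x - p))) ∧
        θlo ≤ 4 * ℓ ^ 2 * ρ ^ 2 + (β⁻¹ + δ) * ρ + (c * ρ * ‖x - p‖) ^ 2 ∧
        4 * ℓ ^ 2 * ρ ^ 2 + (β⁻¹ + δ) * ρ + (c * ρ * ‖x - p‖) ^ 2 ≤ θhi) ∨
      (¬P ∧ ρlo ≤ ρ ∧ ρ ≤ ρhi ∧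
        (∃ a ∈ A x, p + ρ • w - ρ • (B p + C p) - x = ρ • a) ∧
        y = ρ⁻¹ • (p - x) + w + (B x - B p))) →
      0 ≤ ⟪p - x, y - w⟫ - 1 / (4 * β) * ‖x - p‖ ^ 2 ∧
      ‖x - p‖ ^ 2 ≤ K * ((⟪p - x, y - w⟫ - 1 / (4 * β) * ‖x - p‖ ^ 2) *
          (1 + (⟪p - x, y - w⟫ - 1 / (4 * β) * ‖x - p‖ ^ 2))) ∧
      ‖y - w‖ ^ 2 ≤ K * ((⟪p - x, y - w⟫ - 1 / (4 * β) * ‖x - p‖ ^ 2) *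
          (1 + (⟪p - x, y - w⟫ - 1 / (4 * β) * ‖x - p‖ ^ 2))) := by
  have hβi : 0 < β⁻¹ := inv_pos.2 hβ
  have h4β : 1 / (4 * β) = β⁻¹ / 4 := by field_simp
  by_cases hP : P
  · set c₀ : ℝ := 1 / 2 - θhi / 4 with hc₀
    have hc₀0 : 0 < c₀ := by linarith
    set R : ℝ := 2 / δ with hR
    set M : ℝ := (4 * ℓ ^ 2 * R + (β⁻¹ + δ) + c ^ 2 * R ^ 2) / θlo with hM
    have hR0 : 0 < R := by positivity
    have hM0 : 0 ≤ M := by positivity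
    refine ⟨R / c₀ + 4 * M / c₀ * (1 + 1 / c₀), by positivity, fun p w x y ρ hρ0 h => ?_⟩
    rcases h with ⟨-, -, rfl, rfl⟩ | ⟨-, -, hy, hlo, hhi⟩ | ⟨h, -⟩
    · simp
    · have hρR : ρ ≤ R := by
        rw [hR, le_div_iff₀ hδ]
        have : 0 ≤ 4 * ℓ ^ 2 * ρ ^ 2 + β⁻¹ * ρ + (c * ρ * ‖x - p‖) ^ 2 := by positivity
        nlinarith
      rw [add_assoc _ (B x - B p)] at hy
      refine residual_bounds_of_step hβ hc₀0 hM0 hρ0 hρR hy (κ₀ := ℓ + c / 2 * ‖x - p‖) ?_ ?_ ?_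
      · refine (norm_add_le _ _).trans ?_
        have h1 := hB x p
        have h2 := norm_sub_linearization_le hD hlip p x
        linarith [show (ℓ + c / 2 * ‖x - p‖) * ‖x - p‖ =
          ℓ * ‖x - p‖ + c / 2 * ‖x - p‖ ^ 2 by ring]
      · rw [h4β, hc₀]
        have h1 := sq_nonneg (2 * (ℓ * ρ) - 1)
        have h2 := sq_nonneg (c * ρ * ‖x - p‖ - 1)
        have h3 : 0 < δ * ρ := by positivity
        nlinarith
      · have h1 : θlo * ρ⁻¹ ≤ (4 * ℓ ^ 2 * ρ ^ 2 + (β⁻¹ + δ) * ρ + (c * ρ * ‖x - p‖) ^ 2) * ρ⁻¹ := by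
          gcongr
        have h2 : (4 * ℓ ^ 2 * ρ ^ 2 + (β⁻¹ + δ) * ρ + (c * ρ * ‖x - p‖) ^ 2) * ρ⁻¹ =
            4 * ℓ ^ 2 * ρ + (β⁻¹ + δ) + c ^ 2 * ρ ^ 2 * (‖x - p‖ ^ 2 * ρ⁻¹) := by
          field_simp
        have h3 : 4 * ℓ ^ 2 * ρ + (β⁻¹ + δ) + c ^ 2 * ρ ^ 2 * (‖x - p‖ ^ 2 * ρ⁻¹) ≤
            4 * ℓ ^ 2 * R + (β⁻¹ + δ) + c ^ 2 * R ^ 2 * (‖x - p‖ ^ 2 * ρ⁻¹) := by gcongr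
        rw [hM, div_mul_eq_mul_div, le_div_iff₀ hθ0]
        have h4 : 0 ≤ (4 * ℓ ^ 2 * R + (β⁻¹ + δ)) * (‖x - p‖ ^ 2 * ρ⁻¹) := by positivity
        have h5 : 0 ≤ c ^ 2 * R ^ 2 := by positivity
        linarith [add_mul (4 * ℓ ^ 2 * R + (β⁻¹ + δ)) (c ^ 2 * R ^ 2) (‖x - p‖ ^ 2 * ρ⁻¹)]
    · exact absurd hP h
  · obtain ⟨hlo, hle, hhi⟩ := hρ hP
    have hκ0 : 0 < 1 / (4 * β) + ℓ := by positivity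
    set c₀ : ℝ := 1 - ρhi * (1 / (4 * β) + ℓ) with hc₀
    have hc₀0 : 0 < c₀ := by rw [lt_div_iff₀ hκ0] at hhi; linarith
    have hR0 : 0 < ρhi := hlo.trans_le hle
    refine ⟨ρhi / c₀ + 4 * ρlo⁻¹ / c₀ * (1 + 1 / c₀), by positivity, fun p w x y ρ hρ0 h => ?_⟩
    rcases h with ⟨-, -, rfl, rfl⟩ | ⟨h, -⟩ | ⟨-, h1, h2, -, hy⟩
    · simp
    · exact absurd h hP
    · refine residual_bounds_of_step hβ hc₀0 (by positivity) hρ0 h2 hy (hB x p) ?_ ?_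
      · rw [hc₀, add_comm ℓ]
        nlinarith
      · have h3 : ρ⁻¹ ≤ ρlo⁻¹ := by gcongr
        have h4 : 0 ≤ ρlo⁻¹ * (‖x - p‖ ^ 2 * ρ⁻¹) := by positivity
        linarith

/-- In every branch the step produces a point of the graph, with `C` evaluated at `p`. -/
theorem forward_mem_of_step {E : Type*} [NormedAddCommGroup E] [InnerProductSpace ℝ E]
    {A : E → Set E} {B C D : E → E} {D' : E → E →L[ℝ] E} {P Q₁ Q₂ Q₃ Q₄ Q₅ : Prop}
    (hDP : ¬P → D = 0) {p w x y : E} {ρ : ℝ} (hρ : 0 < ρ)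
    (h : (w - B p - C p - D p ∈ A p ∧ Q₁ ∧ x = p ∧ y = w) ∨
      (P ∧ (∃ a ∈ A x, p + ρ • w - ρ • (B p + C p) - x = ρ • (a + (D p + D' p (x - p)))) ∧
        y = ρ⁻¹ • (p - x) + w + (B x - B p) + (D x - (D p + D' p (x - p))) ∧ Q₂ ∧ Q₃) ∨
      (¬P ∧ Q₄ ∧ Q₅ ∧
        (∃ a ∈ A x, p + ρ • w - ρ • (B p + C p) - x = ρ • a) ∧
        y = ρ⁻¹ • (p - x) + w + (B x - B p))) :
    y - B x - C p - D x ∈ A x := by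
  have key : ∀ b : E, p + ρ • w - ρ • (B p + C p) - x = ρ • b →
      b = ρ⁻¹ • (p - x) + w - B p - C p := by
    intro b hb
    have h1 : b = ρ⁻¹ • (ρ • b) := by rw [smul_smul, inv_mul_cancel₀ hρ.ne', one_smul]
    have h2 : ρ • ((ρ⁻¹ • (p - x)) + w - B p - C p) = ρ • b := by
      rw [← hb, smul_sub, smul_sub, smul_add, smul_smul, mul_inv_cancel₀ hρ.ne', one_smul]
      module
    rw [h1, ← h2, smul_smul, inv_mul_cancel₀ hρ.ne', one_smul]
  rcases h with ⟨h, -, rfl, rfl⟩ | ⟨-, ⟨a, ha, hb⟩, rfl, -⟩ | ⟨hP, -, -, ⟨a, ha, hb⟩, rfl⟩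
  · exact h
  · convert ha using 1
    rw [eq_sub_of_add_eq (key _ hb)]
    abel
  · convert ha using 1
    rw [key _ hb, hDP hP, Pi.zero_apply]
    abel

theorem WeakTendsto.add_of_tendsto_norm_sub {ι E : Type*} [NormedAddCommGroup E]
    [InnerProductSpace ℝ E] {l : Filter ι} {x y : ι → E} {a : E} (hx : WeakTendsto x l a)
    (hxy : Tendsto (fun k => ‖y k - x k‖) l (nhds 0)) : WeakTendsto y l a := by
  intro h
  have h1 : Tendsto (fun k => ⟪h, y k - x k⟫) l (nhds 0) := by
    refine squeeze_zero_norm (fun k => abs_real_inner_le_norm _ _) ?_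
    simpa using hxy.const_mul ‖h‖
  have h2 := (hx h).add h1
  simpa only [← inner_add_right, add_sub_cancel, add_zero] using h2

theorem WeakTendsto.clm_apply {ι E F : Type*} [NormedAddCommGroup E] [InnerProductSpace ℝ E]
    [CompleteSpace E] [NormedAddCommGroup F] [InnerProductSpace ℝ F] [CompleteSpace F]
    {l : Filter ι} {x : ι → E} {a : E} (hx : WeakTendsto x l a) (T : E →L[ℝ] F) :
    WeakTendsto (fun k => T (x k)) l (T a) := by
  intro h
  simpa only [ContinuousLinearMap.adjoint_inner_left] using hx (ContinuousLinearMap.adjoint T h)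

theorem WeakTendsto.neg_sum_adjoint {ι κ H : Type*} [Fintype κ] {E : κ → Type*}
    [NormedAddCommGroup H] [InnerProductSpace ℝ H] [CompleteSpace H]
    [∀ i, NormedAddCommGroup (E i)] [∀ i, InnerProductSpace ℝ (E i)] [∀ i, CompleteSpace (E i)]
    {l : Filter ι} (G : ∀ i, H →L[ℝ] E i) {w : ι → ∀ i, E i} {a : ∀ i, E i}
    (hw : ∀ i, WeakTendsto (fun k => w k i) l (a i)) :
    WeakTendsto (fun k => -∑ i, ContinuousLinearMap.adjoint (G i) (w k i)) l
      (-∑ i, ContinuousLinearMap.adjoint (G i) (a i)) := by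
  intro h
  simp only [inner_neg_right, inner_sum]
  exact (tendsto_finsetSum _ fun i _ => (hw i).clm_apply _ h).neg

theorem tendsto_inner_sub_sub_inner {ι E : Type*} [NormedAddCommGroup E]
    [InnerProductSpace ℝ E] {l : Filter ι} {p w x y : ι → E} {p₀ w₀ : E} {R : ℝ}
    (hp : WeakTendsto p l p₀) (hw : WeakTendsto w l w₀) (hpR : ∀ k, ‖p k‖ ≤ R)
    (hwR : ∀ k, ‖w k‖ ≤ R) (hxp : Tendsto (fun k => ‖x k - p k‖) l (nhds 0))
    (hyw : Tendsto (fun k => ‖y k - w k‖) l (nhds 0)) (a b : E) :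
    Tendsto (fun k => ⟪x k - a, y k - b⟫ - ⟪p k, w k⟫) l
      (nhds (⟪p₀ - a, w₀ - b⟫ - ⟪p₀, w₀⟫)) := by
  have h1 : Tendsto (fun k => ⟪x k - p k, w k⟫) l (nhds 0) := by
    refine squeeze_zero_norm (a := fun k => ‖x k - p k‖ * R) (fun k =>
      (abs_real_inner_le_norm _ _).trans (by gcongr; exact hwR k)) ?_
    simpa using hxp.mul_const R
  have h2 : Tendsto (fun k => ⟪p k, y k - w k⟫) l (nhds 0) := by
    refine squeeze_zero_norm (a := fun k => R * ‖y k - w k‖) (fun k =>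
      (abs_real_inner_le_norm _ _).trans (by gcongr; exact hpR k)) ?_
    simpa using hyw.const_mul R
  have h3 : Tendsto (fun k => ⟪x k - p k, y k - w k⟫) l (nhds 0) := by
    refine squeeze_zero_norm (fun k => abs_real_inner_le_norm _ _) ?_
    simpa using hxp.mul hyw
  have h4 := hp.add_of_tendsto_norm_sub hxp b
  have h5 := hw.add_of_tendsto_norm_sub hyw a
  have h6 := ((((h1.add h2).add h3).sub h4).sub h5).add_const ⟪a, b⟫
  convert h6 using 1
  · ext k
    simp only [inner_sub_left, inner_sub_right, real_inner_comm b (x k)]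
    ring
  · congr 1
    simp only [inner_sub_left, inner_sub_right, real_inner_comm b p₀]
    ring

theorem inner_sub_sub_add_smul {E : Type*} [NormedAddCommGroup E] [InnerProductSpace ℝ E]
    (p q b : E) (ν : ℝ) : ⟪p - b, q - (q + ν • (p - b))⟫ = -(ν * ‖p - b‖ ^ 2) := by
  rw [sub_add_cancel_left, inner_neg_right, inner_smul_right, real_inner_self_eq_norm_sq]

/-- Every weak cluster point of asymptotically exact primal-dual block iterates solves the
inclusion. -/
theorem mem_of_weakTendsto_of_residuals {H : Type*} [NormedAddCommGroup H]
    [InnerProductSpace ℝ H] [CompleteSpace H] {κ : Type*} [Fintype κ] {E : κ → Type*}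
    [∀ i, NormedAddCommGroup (E i)] [∀ i, InnerProductSpace ℝ (E i)] [∀ i, CompleteSpace (E i)]
    {ι : Type*} {l : Filter ι} [l.NeBot] (G : ∀ i, H →L[ℝ] E i)
    {T : ∀ i, E i → Set (E i)} {Tn : H → Set H}
    (hT : ∀ i x y u v, u ∈ T i x → v ∈ T i y → 0 ≤ ⟪x - y, u - v⟫)
    (hTn : ∀ x y u v, u ∈ Tn x → v ∈ Tn y → 0 ≤ ⟪x - y, u - v⟫)
    (hres : ∀ i p q, ∃ μ : ℝ, 0 < μ ∧ ∃ a, q + μ • (p - a) ∈ T i a)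
    (hresn : ∀ p q, ∃ μ : ℝ, 0 < μ ∧ ∃ a, q + μ • (p - a) ∈ Tn a)
    {z : ι → H} {w : ι → ∀ i, E i} {z₀ : H} {w₀ : ∀ i, E i}
    (hz : WeakTendsto z l z₀) (hw : ∀ i, WeakTendsto (fun k => w k i) l (w₀ i))
    {R : ℝ} (hzR : ∀ k, ‖z k‖ ≤ R) (hwR : ∀ k i, ‖w k i‖ ≤ R)
    {x y : ι → ∀ i, E i} {xn yn : ι → H} (hy : ∀ k i, y k i ∈ T i (x k i))
    (hyn : ∀ k, yn k ∈ Tn (xn k))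
    (hx0 : ∀ i, Tendsto (fun k => ‖x k i - G i (z k)‖) l (nhds 0))
    (hy0 : ∀ i, Tendsto (fun k => ‖y k i - w k i‖) l (nhds 0))
    (hxn0 : Tendsto (fun k => ‖xn k - z k‖) l (nhds 0))
    (hyn0 : Tendsto (fun k => ‖yn k - -∑ i, ContinuousLinearMap.adjoint (G i) (w k i)‖) l
      (nhds 0)) :
    (∀ i, w₀ i ∈ T i (G i z₀)) ∧ -∑ i, ContinuousLinearMap.adjoint (G i) (w₀ i) ∈ Tn z₀ := by
  set wn : ι → H := fun k => -∑ i, ContinuousLinearMap.adjoint (G i) (w k i) with hwn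
  set wn₀ : H := -∑ i, ContinuousLinearMap.adjoint (G i) (w₀ i) with hwn₀
  choose μ hμ a ha using fun i => hres i (G i z₀) (w₀ i)
  obtain ⟨μn, hμn, an, han⟩ := hresn z₀ wn₀
  have hR : 0 ≤ R := by
    obtain ⟨k⟩ := l.nonempty_of_neBot
    exact (norm_nonneg _).trans (hzR k)
  have hGR : ∀ i k, ‖G i (z k)‖ ≤ max R (‖G i‖ * R) := fun i k =>
    ((G i).le_opNorm _).trans ((by gcongr; exact hzR k : _ ≤ ‖G i‖ * R).trans (le_max_right _ _))
  have hwnR : ∀ k, ‖wn k‖ ≤ max R (∑ i, ‖G i‖ * R) := fun k => by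
    refine le_max_of_le_right ?_
    rw [hwn, norm_neg]
    refine norm_sum_le_of_le _ fun i _ => ((ContinuousLinearMap.adjoint (G i)).le_opNorm _).trans ?_
    rw [LinearIsometryEquiv.norm_map]
    gcongr
    exact hwR k i
  have hlim := (tendsto_finsetSum Finset.univ fun i _ => tendsto_inner_sub_sub_inner
    (hz.clm_apply (G i)) (hw i) (hGR i) (fun k => (hwR k i).trans (le_max_left _ _)) (hx0 i) (hy0 i)
    (a i) (w₀ i + μ i • (G i z₀ - a i))).add (tendsto_inner_sub_sub_inner hz
    (WeakTendsto.neg_sum_adjoint G hw) (fun k => (hzR k).trans (le_max_left _ _)) hwnR hxn0 hyn0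
    an (wn₀ + μn • (z₀ - an)))
  have hzero : ∀ (h : H) (q : ∀ i, E i), ∑ i, ⟪G i h, q i⟫ +
      ⟪h, -∑ i, ContinuousLinearMap.adjoint (G i) (q i)⟫ = 0 := fun h q => by
    simp only [inner_neg_right, inner_sum, ContinuousLinearMap.adjoint_inner_right, add_neg_cancel]
  have hnonneg := ge_of_tendsto hlim (b := 0) (Eventually.of_forall fun k => by
    have h1 : 0 ≤ ∑ i, ⟪x k i - a i, y k i - (w₀ i + μ i • (G i z₀ - a i))⟫ :=
      Finset.sum_nonneg fun i _ => hT i _ _ _ _ (hy k i) (ha i)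
    have h2 := hTn _ _ _ _ (hyn k) han
    have h3 := hzero (z k) (w k)
    rw [Finset.sum_sub_distrib]
    linarith)
  simp only [Finset.sum_sub_distrib, ← hwn₀, inner_sub_sub_add_smul, Finset.sum_neg_distrib]
    at hnonneg
  have h3 := hzero z₀ w₀
  rw [← hwn₀] at h3
  have hpos : ∀ i, 0 ≤ μ i * ‖G i z₀ - a i‖ ^ 2 := fun i => mul_nonneg (hμ i).le (sq_nonneg _)
  have hsum : 0 ≤ ∑ i, μ i * ‖G i z₀ - a i‖ ^ 2 := Finset.sum_nonneg fun i _ => hpos i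
  have hposn : 0 ≤ μn * ‖z₀ - an‖ ^ 2 := mul_nonneg hμn.le (sq_nonneg _)
  refine ⟨fun i => ?_, ?_⟩
  · have h4 : μ i * ‖G i z₀ - a i‖ ^ 2 = 0 :=
      (Finset.sum_eq_zero_iff_of_nonneg fun i _ => hpos i).1 (by linarith) i (Finset.mem_univ i)
    have h5 : G i z₀ - a i = 0 := by simpa [(hμ i).ne'] using h4
    have h6 := ha i
    rwa [h5, smul_zero, add_zero, ← sub_eq_zero.1 h5] at h6
  · have h4 : μn * ‖z₀ - an‖ ^ 2 = 0 := by linarith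
    have h5 : z₀ - an = 0 := by simpa [hμn.ne'] using h4
    rwa [h5, smul_zero, add_zero, ← sub_eq_zero.1 h5] at han

theorem norm_sub_sq_sub_norm_sub_sq {E : Type*} [NormedAddCommGroup E] [InnerProductSpace ℝ E]
    (a b c : E) : ‖a - c‖ ^ 2 - ‖a - b‖ ^ 2 = 2 * ⟪b - c, a⟫ + (‖c‖ ^ 2 - ‖b‖ ^ 2) := by
  rw [norm_sub_sq_real, norm_sub_sq_real, inner_sub_left, real_inner_comm a b, real_inner_comm a c]
  ring

/-- Opial's lemma in a product space with a weighted first component. -/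
theorem exists_weakTendsto_of_fejer {H : Type*} [NormedAddCommGroup H] [InnerProductSpace ℝ H]
    [CompleteSpace H] {κ : Type*} [Fintype κ] {E : κ → Type*} [∀ i, NormedAddCommGroup (E i)]
    [∀ i, InnerProductSpace ℝ (E i)] [∀ i, CompleteSpace (E i)] {γ : ℝ} (hγ : 0 < γ)
    {S : H → (∀ i, E i) → Prop} {z : ℕ → H} {w : ℕ → ∀ i, E i} {R : ℝ}
    (hzR : ∀ k, ‖z k‖ ≤ R) (hwR : ∀ k i, ‖w k i‖ ≤ R)
    (hfejer : ∀ zs ws, S zs ws →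
      Antitone fun k => γ * ‖z k - zs‖ ^ 2 + ∑ i, ‖w k i - ws i‖ ^ 2)
    (hcluster : ∀ U : Ultrafilter ℕ, (U : Filter ℕ) ≤ atTop → ∀ zs ws, WeakTendsto z U zs →
      (∀ i, WeakTendsto (fun k => w k i) U (ws i)) → S zs ws) :
    ∃ zs ws, S zs ws ∧ WeakTendsto z atTop zs ∧
      ∀ i, WeakTendsto (fun k => w k i) atTop (ws i) := by
  have hlim : ∀ U : Ultrafilter ℕ, ∃ (zs : H) (ws : ∀ i, E i), WeakTendsto z U zs ∧
      ∀ i, WeakTendsto (fun k => w k i) U (ws i) := by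
    intro U
    obtain ⟨zs, hzs⟩ := exists_weakTendsto_of_bounded U (Eventually.of_forall hzR)
    choose ws hws using fun i =>
      exists_weakTendsto_of_bounded U (Eventually.of_forall fun k => hwR k i)
    exact ⟨zs, ws, hzs, hws⟩
  choose zU wU hzU hwU using hlim
  have hSU : ∀ U : Ultrafilter ℕ, (U : Filter ℕ) ≤ atTop → S (zU U) (wU U) := fun U hU =>
    hcluster U hU _ _ (hzU U) (hwU U)
  have huniq : ∀ U V : Ultrafilter ℕ, (U : Filter ℕ) ≤ atTop → (V : Filter ℕ) ≤ atTop →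
      zU U = zU V ∧ ∀ i, wU U i = wU V i := by
    intro U V hU hV
    have hconv : ∀ W : Ultrafilter ℕ, (W : Filter ℕ) ≤ atTop →
        ∃ c, Tendsto (fun k => γ * ‖z k - zU W‖ ^ 2 + ∑ i, ‖w k i - wU W i‖ ^ 2) atTop
          (nhds c) := fun W hW =>
      ⟨_, tendsto_atTop_ciInf (hfejer _ _ (hSU W hW)) ⟨0, by
        rintro _ ⟨k, rfl⟩
        positivity⟩⟩
    obtain ⟨c, hc⟩ := hconv U hU
    obtain ⟨c', hc'⟩ := hconv V hV
    set L : ℕ → ℝ := fun k => γ * ⟪zU U - zU V, z k⟫ + ∑ i, ⟪wU U i - wU V i, w k i⟫ with hL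
    set d : ℝ := γ * (‖zU V‖ ^ 2 - ‖zU U‖ ^ 2) + ∑ i, (‖wU V i‖ ^ 2 - ‖wU U i‖ ^ 2) with hd
    have hLlim : Tendsto L atTop (nhds ((c' - c - d) / 2)) := by
      have h1 := ((hc'.sub hc).sub_const d).div_const 2
      refine h1.congr fun k => ?_
      have e1 : ∑ i, ‖w k i - wU V i‖ ^ 2 - ∑ i, ‖w k i - wU U i‖ ^ 2 =
          2 * ∑ i, ⟪wU U i - wU V i, w k i⟫ + ∑ i, (‖wU V i‖ ^ 2 - ‖wU U i‖ ^ 2) := by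
        rw [← Finset.sum_sub_distrib, Finset.mul_sum, ← Finset.sum_add_distrib]
        exact Finset.sum_congr rfl fun i _ => norm_sub_sq_sub_norm_sub_sq _ _ _
      have e2 := congrArg (γ * ·) (norm_sub_sq_sub_norm_sub_sq (z k) (zU U) (zU V))
      simp only [mul_sub, mul_add] at e2
      simp only [hL, hd, mul_sub]
      linarith
    have hLW : ∀ W : Ultrafilter ℕ, Tendsto L W
        (nhds (γ * ⟪zU U - zU V, zU W⟫ + ∑ i, ⟪wU U i - wU V i, wU W i⟫)) := fun W =>
      ((hzU W _).const_mul γ).add (tendsto_finsetSum _ fun i _ => hwU W i _)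
    have e3 := (tendsto_nhds_unique (hLW U) (hLlim.mono_left hU)).trans
      (tendsto_nhds_unique (hLW V) (hLlim.mono_left hV)).symm
    have e4 : γ * ‖zU U - zU V‖ ^ 2 + ∑ i, ‖wU U i - wU V i‖ ^ 2 = 0 := by
      simp only [← real_inner_self_eq_norm_sq]
      have h : ∑ i, ⟪wU U i - wU V i, wU U i - wU V i⟫ =
          ∑ i, ⟪wU U i - wU V i, wU U i⟫ - ∑ i, ⟪wU U i - wU V i, wU V i⟫ := by
        rw [← Finset.sum_sub_distrib]
        exact Finset.sum_congr rfl fun i _ => inner_sub_right _ _ _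
      rw [h, inner_sub_right (zU U - zU V), mul_sub]
      linarith
    have h5 : 0 ≤ γ * ‖zU U - zU V‖ ^ 2 := by positivity
    have h6 : 0 ≤ ∑ i, ‖wU U i - wU V i‖ ^ 2 := by positivity
    refine ⟨?_, fun i => ?_⟩
    · have h7 : γ * ‖zU U - zU V‖ ^ 2 = 0 := by linarith
      exact sub_eq_zero.1 (by simpa [hγ.ne'] using h7)
    · have h7 := (Finset.sum_eq_zero_iff_of_nonneg fun i _ => sq_nonneg ‖wU U i - wU V i‖).1
        (by linarith) i (Finset.mem_univ i)
      exact sub_eq_zero.1 (by simpa using h7)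
  set U₀ : Ultrafilter ℕ := Ultrafilter.of atTop
  have hU₀ : (U₀ : Filter ℕ) ≤ atTop := Ultrafilter.of_le _
  refine ⟨zU U₀, wU U₀, hSU U₀ hU₀, fun h => ?_, fun i h => ?_⟩
  · refine tendsto_iff_ultrafilter _ _ _ |>.2 fun U hU => ?_
    rw [(huniq U₀ U hU₀ hU).1]
    exact hzU U h
  · refine tendsto_iff_ultrafilter _ _ _ |>.2 fun U hU => ?_
    rw [(huniq U₀ U hU₀ hU).2 i]
    exact hwU U i h

/-- One relaxed projection onto a half-space in a weighted product space. -/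
theorem relaxed_projection_le {H : Type*} [NormedAddCommGroup H] [InnerProductSpace ℝ H]
    {κ : Type*} [Fintype κ] {E : κ → Type*} [∀ i, NormedAddCommGroup (E i)]
    [∀ i, InnerProductSpace ℝ (E i)] {γ τlo τhi τ φ π : ℝ} (hγ : 0 < γ) (hτ0 : 0 < τlo)
    (hτ2 : τhi < 2) (hτ : τ ∈ Set.Icc τlo τhi) (hφ : 0 < φ) {z zs v : H} {w ws u : ∀ i, E i}
    (hπ : π = γ⁻¹ * ‖v‖ ^ 2 + ∑ i, ‖u i‖ ^ 2)
    (hsep : φ ≤ ⟪z - zs, v⟫ + ∑ i, ⟪w i - ws i, u i⟫) :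
    0 < π ∧ γ * ‖z - (γ⁻¹ * (τ * φ / π)) • v - zs‖ ^ 2 +
        ∑ i, ‖w i - (τ * φ / π) • u i - ws i‖ ^ 2 + τlo * (2 - τhi) * (φ ^ 2 / π) ≤
      γ * ‖z - zs‖ ^ 2 + ∑ i, ‖w i - ws i‖ ^ 2 := by
  have hπ0 : 0 ≤ π := by rw [hπ]; positivity
  have hπpos : 0 < π := by
    refine hπ0.lt_of_ne fun h0 => ?_
    have h1 : 0 ≤ γ⁻¹ * ‖v‖ ^ 2 := by positivity
    have h2 : 0 ≤ ∑ i, ‖u i‖ ^ 2 := by positivity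
    have hv : v = 0 := by
      have : γ⁻¹ * ‖v‖ ^ 2 = 0 := by linarith
      simpa [hγ.ne'] using this
    have hu : ∀ i, u i = 0 := fun i => by
      have := (Finset.sum_eq_zero_iff_of_nonneg fun i _ => sq_nonneg ‖u i‖).1
        (by linarith) i (Finset.mem_univ i)
      simpa using this
    simp only [hv, hu, inner_zero_right, Finset.sum_const_zero, add_zero] at hsep
    linarith
  refine ⟨hπpos, ?_⟩
  set α : ℝ := τ * φ / π with hα
  have hα0 : 0 ≤ α := div_nonneg (mul_nonneg (hτ0.le.trans hτ.1) hφ.le) hπ0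
  have ez : γ * ‖z - (γ⁻¹ * α) • v - zs‖ ^ 2 =
      γ * ‖z - zs‖ ^ 2 - 2 * α * ⟪z - zs, v⟫ + α ^ 2 * (γ⁻¹ * ‖v‖ ^ 2) := by
    rw [sub_right_comm, norm_sub_sq_real, inner_smul_right, norm_smul, mul_pow, Real.norm_eq_abs,
      sq_abs]
    field_simp
  have ew : ∑ i, ‖w i - α • u i - ws i‖ ^ 2 = ∑ i, ‖w i - ws i‖ ^ 2 -
      2 * α * ∑ i, ⟪w i - ws i, u i⟫ + α ^ 2 * ∑ i, ‖u i‖ ^ 2 := by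
    rw [Finset.mul_sum, Finset.mul_sum, ← Finset.sum_sub_distrib, ← Finset.sum_add_distrib]
    refine Finset.sum_congr rfl fun i _ => ?_
    rw [sub_right_comm, norm_sub_sq_real, inner_smul_right, norm_smul, mul_pow, Real.norm_eq_abs,
      sq_abs]
    ring
  have e1 : α ^ 2 * π = τ ^ 2 * (φ ^ 2 / π) := by rw [hα]; field_simp
  have e2 : α * φ = τ * (φ ^ 2 / π) := by rw [hα]; ring
  have h3 : τlo * (2 - τhi) ≤ τ * (2 - τ) :=
    mul_le_mul hτ.1 (by linarith [hτ.2]) (by linarith) (hτ0.le.trans hτ.1)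
  have h4 : 0 ≤ φ ^ 2 / π := by positivity
  have h5 := mul_le_mul_of_nonneg_left hsep hα0
  have h6 := mul_le_mul_of_nonneg_right h3 h4
  rw [ez, ew]
  have e3 : α ^ 2 * (γ⁻¹ * ‖v‖ ^ 2) + α ^ 2 * ∑ i, ‖u i‖ ^ 2 = α ^ 2 * π := by rw [hπ]; ring
  linarith [show τ * (2 - τ) * (φ ^ 2 / π) = 2 * (τ * (φ ^ 2 / π)) - τ ^ 2 * (φ ^ 2 / π) by ring]

theorem tendsto_zero_of_sufficient_decrease {Φ φ π : ℕ → ℝ} {c K : ℝ} (hc : 0 < c) (hK : 0 ≤ K)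
    (hΦ : ∀ k, 0 ≤ Φ k) (hφ : ∀ k, 0 ≤ φ k) (hπ : ∀ k, π k ≤ K * (φ k * (1 + φ k)))
    (hdec : ∀ k, 0 < φ k → 0 < π k ∧ Φ (k + 1) + c * (φ k ^ 2 / π k) ≤ Φ k)
    (hanti : Antitone Φ) : Tendsto φ atTop (nhds 0) := by
  have hstep : ∀ k, c / (K + 1) * (φ k / (1 + φ k)) ≤ Φ k - Φ (k + 1) := by
    intro k
    rcases (hφ k).eq_or_lt with h0 | h0
    · rw [← h0, zero_div, mul_zero, sub_nonneg]
      exact hanti k.le_succ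
    · obtain ⟨hp, hd⟩ := hdec k h0
      have h1 : π k ≤ (K + 1) * (φ k * (1 + φ k)) :=
        (hπ k).trans (by gcongr; linarith)
      have h2 : φ k ^ 2 / ((K + 1) * (φ k * (1 + φ k))) ≤ φ k ^ 2 / π k := by gcongr
      have h3 : c / (K + 1) * (φ k / (1 + φ k)) = c * (φ k ^ 2 / ((K + 1) * (φ k * (1 + φ k)))) := by
        field_simp
      rw [h3]
      have := mul_le_mul_of_nonneg_left h2 hc.le
      linarith
  have hlim := tendsto_atTop_ciInf hanti ⟨0, by rintro _ ⟨k, rfl⟩; exact hΦ k⟩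
  have hdiff : Tendsto (fun k => Φ k - Φ (k + 1)) atTop (nhds 0) := by
    simpa using hlim.sub (hlim.comp (tendsto_add_atTop_nat 1))
  have h1 : Tendsto (fun k => c / (K + 1) * (φ k / (1 + φ k))) atTop (nhds 0) :=
    squeeze_zero (fun k => by have := hφ k; positivity) hstep hdiff
  have h2 : Tendsto (fun k => φ k / (1 + φ k)) atTop (nhds 0) := by
    have h := h1.const_mul (c / (K + 1))⁻¹
    rw [mul_zero] at h
    refine h.congr fun k => ?_
    rw [inv_mul_cancel_left₀ (by positivity)]
  have h3 := h2.div (h2.const_sub 1) (by norm_num)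
  rw [zero_div] at h3
  refine h3.congr fun k => ?_
  have : 0 < 1 + φ k := by linarith [hφ k]
  simp only [Pi.div_apply]
  field_simp
  ring_nf

/-- The separating affine function as a sum of block contributions. -/
theorem separator_eq_sum {H : Type*} [NormedAddCommGroup H] [InnerProductSpace ℝ H]
    [CompleteSpace H] {κ : Type*} [Fintype κ] {E : κ → Type*} [∀ i, NormedAddCommGroup (E i)]
    [∀ i, InnerProductSpace ℝ (E i)] [∀ i, CompleteSpace (E i)] (G : ∀ i, H →L[ℝ] E i)
    (z xn yn : H) (w x y : ∀ i, E i) (q : κ → ℝ) (qn : ℝ) :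
    ⟪z, (∑ i, ContinuousLinearMap.adjoint (G i) (y i)) + yn⟫ + (∑ i, ⟪w i, x i - G i xn⟫) -
        ((∑ i, (⟪x i, y i⟫ + q i)) + (⟪xn, yn⟫ + qn)) =
      (∑ i, (⟪G i z - x i, y i - w i⟫ - q i)) +
        (⟪z - xn, yn - -∑ i, ContinuousLinearMap.adjoint (G i) (w i)⟫ - qn) := by
  simp only [sub_neg_eq_add, inner_add_right, inner_sub_left, inner_sub_right, inner_sum, map_sub,
    ContinuousLinearMap.adjoint_inner_right, Finset.sum_add_distrib, Finset.sum_sub_distrib,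
    fun i => real_inner_comm (w i) (x i), fun i => real_inner_comm (w i) (G i xn)]
  ring

theorem separator_gradient_norm_le {H : Type*} [NormedAddCommGroup H] [InnerProductSpace ℝ H]
    [CompleteSpace H] {κ : Type*} [Fintype κ] {E : κ → Type*} [∀ i, NormedAddCommGroup (E i)]
    [∀ i, InnerProductSpace ℝ (E i)] [∀ i, CompleteSpace (E i)] (G : ∀ i, H →L[ℝ] E i) {γ : ℝ}
    (hγ : 0 < γ) {z xn yn : H} {w x y : ∀ i, E i} {Q : ℝ} (hx : ∀ i, ‖x i - G i z‖ ^ 2 ≤ Q)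
    (hy : ∀ i, ‖y i - w i‖ ^ 2 ≤ Q) (hxn : ‖xn - z‖ ^ 2 ≤ Q)
    (hyn : ‖yn - -∑ i, ContinuousLinearMap.adjoint (G i) (w i)‖ ^ 2 ≤ Q) :
    γ⁻¹ * ‖(∑ i, ContinuousLinearMap.adjoint (G i) (y i)) + yn‖ ^ 2 +
        ∑ i, ‖x i - G i xn‖ ^ 2 ≤
      (γ⁻¹ * (∑ i, ‖G i‖ + 1) ^ 2 + ∑ i, (1 + ‖G i‖) ^ 2) * Q := by
  have hQ : 0 ≤ Q := (sq_nonneg _).trans hxn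
  set r := √Q with hr
  have hr2 : r ^ 2 = Q := Real.sq_sqrt hQ
  have hv : ‖(∑ i, ContinuousLinearMap.adjoint (G i) (y i)) + yn‖ ≤ (∑ i, ‖G i‖ + 1) * r := by
    have e : (∑ i, ContinuousLinearMap.adjoint (G i) (y i)) + yn =
        (∑ i, ContinuousLinearMap.adjoint (G i) (y i - w i)) +
          (yn - -∑ i, ContinuousLinearMap.adjoint (G i) (w i)) := by
      simp only [map_sub, Finset.sum_sub_distrib]
      abel
    rw [e, add_mul, one_mul, Finset.sum_mul]
    refine (norm_add_le _ _).trans (add_le_add (norm_sum_le_of_le _ fun i _ => ?_)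
      (Real.le_sqrt_of_sq_le hyn))
    refine ((ContinuousLinearMap.adjoint (G i)).le_opNorm _).trans ?_
    rw [LinearIsometryEquiv.norm_map]
    gcongr
    exact Real.le_sqrt_of_sq_le (hy i)
  have hu : ∀ i, ‖x i - G i xn‖ ≤ (1 + ‖G i‖) * r := by
    intro i
    have e : x i - G i xn = (x i - G i z) - G i (xn - z) := by rw [map_sub]; abel
    rw [e, add_mul, one_mul]
    refine (norm_sub_le _ _).trans (add_le_add (Real.le_sqrt_of_sq_le (hx i)) ?_)
    refine ((G i).le_opNorm _).trans ?_
    gcongr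
    exact Real.le_sqrt_of_sq_le hxn
  rw [add_mul, Finset.sum_mul, mul_assoc, ← hr2]
  simp only [← mul_pow]
  gcongr with i
  exact hu i

theorem inner_nonneg_of_forward_mem {E : Type*} [NormedAddCommGroup E] [InnerProductSpace ℝ E]
    {A : E → Set E} (hA : ∀ x y u v, u ∈ A x → v ∈ A y → 0 ≤ ⟪x - y, u - v⟫)
    {B C D : E → E} {β : ℝ} (hB : ∀ x y, 0 ≤ ⟪x - y, B x - B y⟫) (hβ : 0 < β)
    (hC : ∀ x y, β * ‖C x - C y‖ ^ 2 ≤ ⟪x - y, C x - C y⟫)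
    (hD : ∀ x y, 0 ≤ ⟪x - y, D x - D y⟫) {x y u v : E}
    (hu : u - B x - C x - D x ∈ A x) (hv : v - B y - C y - D y ∈ A y) :
    0 ≤ ⟪x - y, u - v⟫ := by
  have h := inner_sub_le_of_forward_mem hA hB hβ hC hD hv hu
  rw [sub_self, norm_zero] at h
  rw [← neg_sub v u, inner_neg_right]
  linarith

theorem exists_forward_mem {E : Type*} [NormedAddCommGroup E] [InnerProductSpace ℝ E]
    [CompleteSpace E] {A : E → Set E} (hA : ∀ x y u v, u ∈ A x → v ∈ A y → 0 ≤ ⟪x - y, u - v⟫)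
    (hmax : ∀ p q, (∀ r s, s ∈ A r → 0 ≤ ⟪p - r, q - s⟫) → q ∈ A p) {B C D : E → E}
    {D' : E → E →L[ℝ] E} {ℓ β c : ℝ} (hB : ∀ x y, ‖B x - B y‖ ≤ ℓ * ‖x - y‖) (hβ : 0 < β)
    (hC : ∀ x y, β * ‖C x - C y‖ ^ 2 ≤ ⟪x - y, C x - C y⟫)
    (hD : ∀ x, HasFDerivAt D (D' x) x) (hc : 0 ≤ c)
    (hlip : ∀ x y, ‖D' x - D' y‖ ≤ c * ‖x - y‖) (p q : E) :
    ∃ μ : ℝ, 0 < μ ∧ ∃ a, q + μ • (p - a) ∈ {b | b - B a - C a - D a ∈ A a} := by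
  obtain ⟨μ, hμ, a, ha⟩ := exists_add_smul_sub_mem_of_lipschitzOnBalls hA hmax
    (exists_lipschitz_on_closedBall_add hB hβ hC hD hc hlip) p q
  refine ⟨μ, hμ, a, ?_⟩
  rwa [Set.mem_ofPred_eq, sub_sub, sub_sub, ← add_assoc]

theorem tendsto_norm_zero_of_sq_le {ι E : Type*} [SeminormedAddCommGroup E] {l : Filter ι}
    {r : ι → E} {Q : ι → ℝ} (hQ : Tendsto Q l (nhds 0)) (h : ∀ k, ‖r k‖ ^ 2 ≤ Q k) :
    Tendsto (fun k => ‖r k‖) l (nhds 0) := by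
  refine squeeze_zero (fun k => norm_nonneg _) (fun k => Real.le_sqrt_of_sq_le (h k)) ?_
  simpa using hQ.sqrt

/-- Evaluating the cocoercive part at the new point does not affect the limit of the residual. -/
theorem tendsto_norm_forward_sub {ι E : Type*} [NormedAddCommGroup E] [InnerProductSpace ℝ E]
    {C : E → E} {β : ℝ} (hβ : 0 < β)
    (hC : ∀ x y, β * ‖C x - C y‖ ^ 2 ≤ ⟪x - y, C x - C y⟫) {l : Filter ι} {p w x y : ι → E}
    (hx : Tendsto (fun k => ‖x k - p k‖) l (nhds 0))
    (hy : Tendsto (fun k => ‖y k - w k‖) l (nhds 0)) :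
    Tendsto (fun k => ‖y k + C (x k) - C (p k) - w k‖) l (nhds 0) := by
  refine squeeze_zero (g := fun k => ‖y k - w k‖ + β⁻¹ * ‖x k - p k‖) (fun k => norm_nonneg _)
    (fun k => ?_) (by simpa using hy.add (hx.const_mul β⁻¹))
  rw [show y k + C (x k) - C (p k) - w k = (y k - w k) + (C (x k) - C (p k)) by abel]
  exact (norm_add_le _ _).trans (by gcongr; exact norm_sub_le_of_cocoercive hβ hC _ _)

theorem norm_le_of_sq_norm_sub_le {E : Type*} [SeminormedAddCommGroup E] {a b : E} {M : ℝ}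
    (h : ‖a - b‖ ^ 2 ≤ M) : ‖a‖ ≤ √M + ‖b‖ := by
  have h1 := Real.le_sqrt_of_sq_le h
  have h2 := norm_le_norm_sub_add a b
  linarith

/-- Fejér monotonicity, boundedness and vanishing separation of relaxed projections onto separating
half-spaces. -/
theorem fejer_of_separating_projections {H : Type*} [NormedAddCommGroup H]
    [InnerProductSpace ℝ H] {κ : Type*} [Fintype κ] {E : κ → Type*}
    [∀ i, NormedAddCommGroup (E i)] [∀ i, InnerProductSpace ℝ (E i)]
    {γ τlo τhi K : ℝ} (hγ : 0 < γ) (hτ0 : 0 < τlo) (hτ2 : τhi < 2) (hK : 0 ≤ K)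
    {S : H → (∀ i, E i) → Prop} (hS : ∃ zs ws, S zs ws) {z v : ℕ → H} {w u : ℕ → ∀ i, E i}
    {φ π : ℕ → ℝ} (hπ : ∀ k, π k = γ⁻¹ * ‖v k‖ ^ 2 + ∑ i, ‖u k i‖ ^ 2) (hφ0 : ∀ k, 0 ≤ φ k)
    (hπφ : ∀ k, π k ≤ K * (φ k * (1 + φ k)))
    (hsep : ∀ zs ws, S zs ws → ∀ k, φ k ≤ ⟪z k - zs, v k⟫ + ∑ i, ⟪w k i - ws i, u k i⟫)
    (hupdate : ∀ k,
      (0 < φ k → ∃ τ ∈ Set.Icc τlo τhi,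
        z (k + 1) = z k - (γ⁻¹ * (τ * φ k / π k)) • v k ∧
        ∀ i, w (k + 1) i = w k i - (τ * φ k / π k) • u k i) ∧
      (φ k ≤ 0 → z (k + 1) = z k ∧ ∀ i, w (k + 1) i = w k i)) :
    (∀ zs ws, S zs ws → Antitone fun k => γ * ‖z k - zs‖ ^ 2 + ∑ i, ‖w k i - ws i‖ ^ 2) ∧
      (∃ R, (∀ k, ‖z k‖ ≤ R) ∧ ∀ k i, ‖w k i‖ ≤ R) ∧ Tendsto φ atTop (nhds 0) := by
  set Φ : H → (∀ i, E i) → ℕ → ℝ := fun zs ws k =>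
    γ * ‖z k - zs‖ ^ 2 + ∑ i, ‖w k i - ws i‖ ^ 2 with hΦ
  have hdec : ∀ zs ws, S zs ws → ∀ k, 0 < φ k →
      0 < π k ∧ Φ zs ws (k + 1) + τlo * (2 - τhi) * (φ k ^ 2 / π k) ≤ Φ zs ws k :=
    fun zs ws hs k hk => by
      obtain ⟨τ, hτ, hz1, hw1⟩ := (hupdate k).1 hk
      simp only [hΦ, hz1, hw1]
      exact relaxed_projection_le hγ hτ0 hτ2 hτ hk (hπ k) (hsep zs ws hs k)
  have hc : 0 < τlo * (2 - τhi) := mul_pos hτ0 (by linarith)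
  have hanti : ∀ zs ws, S zs ws → Antitone (Φ zs ws) := fun zs ws hs =>
    antitone_nat_of_succ_le fun k => by
      rcases lt_or_ge 0 (φ k) with hk | hk
      · obtain ⟨h1, h2⟩ := hdec zs ws hs k hk
        have : 0 ≤ τlo * (2 - τhi) * (φ k ^ 2 / π k) := by positivity
        linarith
      · obtain ⟨hz1, hw1⟩ := (hupdate k).2 hk
        simp only [hΦ, hz1, hw1, le_refl]
  obtain ⟨zs, ws, hs⟩ := hS
  have hφlim : Tendsto φ atTop (nhds 0) := tendsto_zero_of_sufficient_decrease hc
    hK (fun k => by positivity) hφ0 hπφ (hdec zs ws hs) (hanti zs ws hs)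
  have hΦ0 : ∀ k, γ * ‖z k - zs‖ ^ 2 + ∑ i, ‖w k i - ws i‖ ^ 2 ≤ Φ zs ws 0 := fun k =>
    hanti zs ws hs k.zero_le
  have hzb : ∀ k, ‖z k‖ ≤ √(Φ zs ws 0 / γ) + ‖zs‖ := fun k => norm_le_of_sq_norm_sub_le <| by
    rw [le_div_iff₀' hγ]
    have : 0 ≤ ∑ i, ‖w k i - ws i‖ ^ 2 := by positivity
    linarith [hΦ0 k]
  have hwb : ∀ k i, ‖w k i‖ ≤ √(Φ zs ws 0) + ∑ i, ‖ws i‖ := fun k i => by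
    refine (norm_le_of_sq_norm_sub_le (b := ws i) (M := Φ zs ws 0) ?_).trans
      (add_le_add le_rfl (Finset.single_le_sum (f := fun i => ‖ws i‖)
        (fun j _ => norm_nonneg _) (Finset.mem_univ i)))
    have h1 := Finset.single_le_sum (f := fun i => ‖w k i - ws i‖ ^ 2)
      (fun j _ => sq_nonneg _) (Finset.mem_univ i)
    have h2 : 0 ≤ γ * ‖z k - zs‖ ^ 2 := by positivity
    linarith [hΦ0 k]
  exact ⟨hanti, ⟨_, fun k => (hzb k).trans (le_max_left _ _),
    fun k i => (hwb k i).trans (le_max_right _ _)⟩, hφlim⟩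

set_option maxHeartbeats 1000000 in
/-- weak convergence of the projective splitting algorithm with backward,
half-forward and proximal-Newton steps.

Indices `i = 1, …, n−1` are modeled by `i : Fin m` (with Hilbert spaces `E i` and bounded linear
maps `G i : H₀ → E i`), while the last index `n` (for which `G_n = id` and the space is `H₀`) is
treated separately via the operators `An, Bn, Cn, Dn` and the sequences `xn, yn, ρn`.  Each block
`T_i = A_i + B_i + C_i + D_i` consists of a maximal monotone `A_i`, a monotone `ℓ_i`-Lipschitz
`B_i`, a `β_i`-cocoercive `C_i`, and a monotone differentiable `D_i` with `m_i`-Lipschitz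
derivative.  The index set `I_D` is modeled by `ID : Set (Fin m)` together with `IDn : Prop`
(whether `n ∈ I_D`).  The iterates satisfy, for each `k` and each block, one of the three
branches (I), (II) (proximal-Newton, `i ∈ I_D`), (III) (`i ∉ I_D`), followed by the relaxed
projection onto the separating half-space.  The conclusion is weak convergence of
`(zᵏ, w₁ᵏ, …, w_{n−1}ᵏ)` to a point of the extended-solution set `S`, together with the weak
convergence of the auxiliary sequences `x_iᵏ ⇀ G_i z̄` and `y_iᵏ ⇀ w̄_i`. -/
theorem projective_splitting_weak_convergence
    {H0 : Type*} [NormedAddCommGroup H0] [InnerProductSpace ℝ H0] [CompleteSpace H0]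
    {m : ℕ} {E : Fin m → Type*} [∀ i, NormedAddCommGroup (E i)]
    [∀ i, InnerProductSpace ℝ (E i)] [∀ i, CompleteSpace (E i)]
    (G : ∀ i, H0 →L[ℝ] E i)
    -- the operators A_i, B_i, C_i, D_i on E i, for i = 1, …, n−1
    (A : ∀ i, E i → Set (E i))
    (hAmono : ∀ i, ∀ x y u v, u ∈ A i x → v ∈ A i y → 0 ≤ ⟪x - y, u - v⟫)
    (hAmax : ∀ i, ∀ p q, (∀ r s, s ∈ A i r → 0 ≤ ⟪p - r, q - s⟫) → q ∈ A i p)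
    (B : ∀ i, E i → E i) (ℓ : Fin m → ℝ) (hℓ : ∀ i, 0 ≤ ℓ i)
    (hBmono : ∀ i, ∀ x y, 0 ≤ ⟪x - y, B i x - B i y⟫)
    (hBlip : ∀ i, ∀ x y, ‖B i x - B i y‖ ≤ ℓ i * ‖x - y‖)
    (C : ∀ i, E i → E i) (β : Fin m → ℝ) (hβ : ∀ i, 0 < β i)
    (hC : ∀ i, ∀ x y, β i * ‖C i x - C i y‖ ^ 2 ≤ ⟪x - y, C i x - C i y⟫)
    (D : ∀ i, E i → E i) (D' : ∀ i, E i → E i →L[ℝ] E i)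
    (hD : ∀ i, ∀ x, HasFDerivAt (D i) (D' i x) x)
    (hDmono : ∀ i, ∀ x y, 0 ≤ ⟪x - y, D i x - D i y⟫)
    (mc : Fin m → ℝ) (hmc : ∀ i, 0 ≤ mc i)
    (hDlip : ∀ i, ∀ x y, ‖D' i x - D' i y‖ ≤ mc i * ‖x - y‖)
    -- the operators for the last index n, acting on H0 (G_n = id)
    (An : H0 → Set H0)
    (hAnmono : ∀ x y u v, u ∈ An x → v ∈ An y → 0 ≤ ⟪x - y, u - v⟫)
    (hAnmax : ∀ p q, (∀ r s, s ∈ An r → 0 ≤ ⟪p - r, q - s⟫) → q ∈ An p)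
    (Bn : H0 → H0) (ℓn : ℝ) (hℓn : 0 ≤ ℓn)
    (hBnmono : ∀ x y, 0 ≤ ⟪x - y, Bn x - Bn y⟫)
    (hBnlip : ∀ x y, ‖Bn x - Bn y‖ ≤ ℓn * ‖x - y‖)
    (Cn : H0 → H0) (βn : ℝ) (hβn : 0 < βn)
    (hCn : ∀ x y, βn * ‖Cn x - Cn y‖ ^ 2 ≤ ⟪x - y, Cn x - Cn y⟫)
    (Dn : H0 → H0) (Dn' : H0 → H0 →L[ℝ] H0) (hDn : ∀ x, HasFDerivAt Dn (Dn' x) x)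
    (hDnmono : ∀ x y, 0 ≤ ⟪x - y, Dn x - Dn y⟫)
    (mcn : ℝ) (hmcn : 0 ≤ mcn) (hDnlip : ∀ x y, ‖Dn' x - Dn' y‖ ≤ mcn * ‖x - y‖)
    -- the index set I_D
    (ID : Set (Fin m)) (IDn : Prop)
    (hID : ∀ i ∈ ID, 0 < mc i) (hIDc : ∀ i ∉ ID, D i = 0)
    (hIDn : IDn → 0 < mcn) (hIDnc : ¬IDn → Dn = 0)
    -- the extended-solution set S is nonempty
    (hS : ∃ (zs : H0) (ws : ∀ i, E i),
      (∀ i, ws i - B i (G i zs) - C i (G i zs) - D i (G i zs) ∈ A i (G i zs)) ∧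
      (-(∑ i, ContinuousLinearMap.adjoint (G i) (ws i))) - Bn zs - Cn zs - Dn zs ∈ An zs)
    -- parameters
    (τlo τhi θlo θhi ρhat δhat γ : ℝ)
    (hτ0 : 0 < τlo) (hτ1 : τlo < τhi) (hτ2 : τhi < 2)
    (hθ0 : 0 < θlo) (hθ1 : θlo < θhi) (hθ2 : θhi < 2)
    (hρhat : 0 < ρhat) (hδ : 0 < δhat) (hγ : 0 < γ)
    (ρlo ρhi : Fin m → ℝ) (ρlon ρhin : ℝ)
    (hρbnds : ∀ i ∉ ID, 0 < ρlo i ∧ ρlo i ≤ ρhi i ∧ ρhi i < 1 / (1 / (4 * β i) + ℓ i))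
    (hρbndsn : ¬IDn → 0 < ρlon ∧ ρlon ≤ ρhin ∧ ρhin < 1 / (1 / (4 * βn) + ℓn))
    -- the sequences generated by the algorithm
    (z : ℕ → H0) (w : ℕ → ∀ i, E i)
    (x : ℕ → ∀ i, E i) (y : ℕ → ∀ i, E i) (ρ : ℕ → Fin m → ℝ)
    (xn yn : ℕ → H0) (ρn : ℕ → ℝ)
    (hρpos : ∀ k i, 0 < ρ k i) (hρnpos : ∀ k, 0 < ρn k)
    -- for every k and every i < n, one of the branches (I), (II), (III) holds
    (hbranch : ∀ k i,
      -- (I)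
      (w k i - B i (G i (z k)) - C i (G i (z k)) - D i (G i (z k)) ∈ A i (G i (z k)) ∧
        ρ k i = ρhat ∧ x k i = G i (z k) ∧ y k i = w k i) ∨
      -- (II) proximal-Newton step (i ∈ I_D)
      (i ∈ ID ∧
        (∃ a ∈ A i (x k i),
          G i (z k) + ρ k i • w k i - ρ k i • (B i (G i (z k)) + C i (G i (z k))) - x k i =
            ρ k i • (a + (D i (G i (z k)) + D' i (G i (z k)) (x k i - G i (z k))))) ∧
        y k i = (ρ k i)⁻¹ • (G i (z k) - x k i) + w k i + (B i (x k i) - B i (G i (z k))) +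
          (D i (x k i) - (D i (G i (z k)) + D' i (G i (z k)) (x k i - G i (z k)))) ∧
        θlo ≤ 4 * ℓ i ^ 2 * ρ k i ^ 2 + ((β i)⁻¹ + δhat) * ρ k i +
            (mc i * ρ k i * ‖x k i - G i (z k)‖) ^ 2 ∧
        4 * ℓ i ^ 2 * ρ k i ^ 2 + ((β i)⁻¹ + δhat) * ρ k i +
            (mc i * ρ k i * ‖x k i - G i (z k)‖) ^ 2 ≤ θhi) ∨
      -- (III) backward step with Tseng correction (i ∉ I_D)
      (i ∉ ID ∧ ρlo i ≤ ρ k i ∧ ρ k i ≤ ρhi i ∧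
        (∃ a ∈ A i (x k i),
          G i (z k) + ρ k i • w k i - ρ k i • (B i (G i (z k)) + C i (G i (z k))) - x k i =
            ρ k i • a) ∧
        y k i = (ρ k i)⁻¹ • (G i (z k) - x k i) + w k i + (B i (x k i) - B i (G i (z k)))))
    -- the same trichotomy at the last index n (G_n = id, w_nᵏ = −Σ_i G_i* w_iᵏ)
    (hbranchn : ∀ k,
      ((-(∑ i, ContinuousLinearMap.adjoint (G i) (w k i))) - Bn (z k) - Cn (z k) - Dn (z k) ∈
          An (z k) ∧
        ρn k = ρhat ∧ xn k = z k ∧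
        yn k = -(∑ i, ContinuousLinearMap.adjoint (G i) (w k i))) ∨
      (IDn ∧
        (∃ a ∈ An (xn k),
          z k + ρn k • (-(∑ i, ContinuousLinearMap.adjoint (G i) (w k i))) -
              ρn k • (Bn (z k) + Cn (z k)) - xn k =
            ρn k • (a + (Dn (z k) + Dn' (z k) (xn k - z k)))) ∧
        yn k = (ρn k)⁻¹ • (z k - xn k) +
          (-(∑ i, ContinuousLinearMap.adjoint (G i) (w k i))) + (Bn (xn k) - Bn (z k)) +
          (Dn (xn k) - (Dn (z k) + Dn' (z k) (xn k - z k))) ∧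
        θlo ≤ 4 * ℓn ^ 2 * ρn k ^ 2 + (βn⁻¹ + δhat) * ρn k +
            (mcn * ρn k * ‖xn k - z k‖) ^ 2 ∧
        4 * ℓn ^ 2 * ρn k ^ 2 + (βn⁻¹ + δhat) * ρn k +
            (mcn * ρn k * ‖xn k - z k‖) ^ 2 ≤ θhi) ∨
      (¬IDn ∧ ρlon ≤ ρn k ∧ ρn k ≤ ρhin ∧
        (∃ a ∈ An (xn k),
          z k + ρn k • (-(∑ i, ContinuousLinearMap.adjoint (G i) (w k i))) -
              ρn k • (Bn (z k) + Cn (z k)) - xn k = ρn k • a) ∧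
        yn k = (ρn k)⁻¹ • (z k - xn k) +
          (-(∑ i, ContinuousLinearMap.adjoint (G i) (w k i))) + (Bn (xn k) - Bn (z k))))
    -- the auxiliary quantities uᵏ, vᵏ, φₖ, πₖ
    (u : ℕ → ∀ i, E i) (hu : ∀ k i, u k i = x k i - G i (xn k))
    (v : ℕ → H0)
    (hv : ∀ k, v k = (∑ i, ContinuousLinearMap.adjoint (G i) (y k i)) + yn k)
    (φ : ℕ → ℝ)
    (hφ : ∀ k, φ k = ⟪z k, v k⟫ + (∑ i, ⟪w k i, u k i⟫) -
      ((∑ i, (⟪x k i, y k i⟫ + 1 / (4 * β i) * ‖x k i - G i (z k)‖ ^ 2)) +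
        (⟪xn k, yn k⟫ + 1 / (4 * βn) * ‖xn k - z k‖ ^ 2)))
    (π : ℕ → ℝ)
    (hπ : ∀ k, π k = γ⁻¹ * ‖v k‖ ^ 2 + ∑ i, ‖u k i‖ ^ 2)
    -- the projection/update step
    (hupdate : ∀ k,
      (0 < φ k → ∃ τ ∈ Set.Icc τlo τhi,
        z (k + 1) = z k - (γ⁻¹ * (τ * φ k / π k)) • v k ∧
        ∀ i, w (k + 1) i = w k i - (τ * φ k / π k) • u k i) ∧
      (φ k ≤ 0 → z (k + 1) = z k ∧ ∀ i, w (k + 1) i = w k i)) :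
    -- conclusion: weak convergence to a point of the extended-solution set
    ∃ (zbar : H0) (wbar : ∀ i, E i),
      (∀ h : H0, Tendsto (fun k => ⟪h, z k⟫) atTop (nhds ⟪h, zbar⟫)) ∧
      (∀ i, ∀ h : E i, Tendsto (fun k => ⟪h, w k i⟫) atTop (nhds ⟪h, wbar i⟫)) ∧
      (∀ h : H0,
        Tendsto (fun k => ⟪h, -(∑ i, ContinuousLinearMap.adjoint (G i) (w k i))⟫) atTop
          (nhds ⟪h, -(∑ i, ContinuousLinearMap.adjoint (G i) (wbar i))⟫)) ∧
      (∀ i, wbar i - B i (G i zbar) - C i (G i zbar) - D i (G i zbar) ∈ A i (G i zbar)) ∧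
      ((-(∑ i, ContinuousLinearMap.adjoint (G i) (wbar i))) - Bn zbar - Cn zbar - Dn zbar ∈
        An zbar) ∧
      (∀ i, ∀ h : E i, Tendsto (fun k => ⟪h, x k i⟫) atTop (nhds ⟪h, G i zbar⟫)) ∧
      (∀ h : H0, Tendsto (fun k => ⟪h, xn k⟫) atTop (nhds ⟪h, zbar⟫)) ∧
      (∀ i, ∀ h : E i, Tendsto (fun k => ⟪h, y k i⟫) atTop (nhds ⟪h, wbar i⟫)) ∧
      (∀ h : H0,
        Tendsto (fun k => ⟪h, yn k⟫) atTop
          (nhds ⟪h, -(∑ i, ContinuousLinearMap.adjoint (G i) (wbar i))⟫)) := by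
  have hy' : ∀ k i, y k i - B i (x k i) - C i (G i (z k)) - D i (x k i) ∈ A i (x k i) :=
    fun k i => forward_mem_of_step (hIDc i) (hρpos k i) (hbranch k i)
  have hyn' : ∀ k, yn k - Bn (xn k) - Cn (z k) - Dn (xn k) ∈ An (xn k) :=
    fun k => forward_mem_of_step hIDnc (hρnpos k) (hbranchn k)
  choose K hK0 hK using fun i => exists_residual_bounds (A := A i) (C := C i) (P := i ∈ ID)
    (ρhat := ρhat) (hℓ i) (hBlip i) (hβ i) (hD i) (hDlip i) hθ0 hθ2 hδ (hρbnds i)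
  obtain ⟨Kn, hKn0, hKn⟩ := exists_residual_bounds (A := An) (C := Cn) (P := IDn)
    (ρhat := ρhat) hℓn hBnlip hβn hDn hDnlip hθ0 hθ2 hδ hρbndsn
  set wn : ℕ → H0 := fun k => -∑ i, ContinuousLinearMap.adjoint (G i) (w k i) with hwn
  set f : ℕ → Fin m → ℝ := fun k i => ⟪G i (z k) - x k i, y k i - w k i⟫ -
    1 / (4 * β i) * ‖x k i - G i (z k)‖ ^ 2 with hf
  set fn : ℕ → ℝ := fun k => ⟪z k - xn k, yn k - wn k⟫ - 1 / (4 * βn) * ‖xn k - z k‖ ^ 2 with hfn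
  have hres : ∀ k i, 0 ≤ f k i ∧ ‖x k i - G i (z k)‖ ^ 2 ≤ K i * (f k i * (1 + f k i)) ∧
      ‖y k i - w k i‖ ^ 2 ≤ K i * (f k i * (1 + f k i)) := fun k i =>
    hK i _ _ _ _ _ (hρpos k i) (hbranch k i)
  have hresn : ∀ k, 0 ≤ fn k ∧ ‖xn k - z k‖ ^ 2 ≤ Kn * (fn k * (1 + fn k)) ∧
      ‖yn k - wn k‖ ^ 2 ≤ Kn * (fn k * (1 + fn k)) := fun k =>
    hKn _ _ _ _ _ (hρnpos k) (hbranchn k)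
  have hφf : ∀ k, φ k = ∑ i, f k i + fn k := fun k => by
    rw [hφ, hv]
    simp only [hu]
    exact separator_eq_sum G _ _ _ _ _ _ _ _
  have hfφ : ∀ k i, f k i ≤ φ k := fun k i => by
    have h1 := Finset.single_le_sum (f := f k) (fun j _ => (hres k j).1) (Finset.mem_univ i)
    linarith [hφf k, (hresn k).1]
  have hfnφ : ∀ k, fn k ≤ φ k := fun k => by
    linarith [hφf k, Finset.sum_nonneg fun i (_ : i ∈ Finset.univ) => (hres k i).1]
  have hφ0 : ∀ k, 0 ≤ φ k := fun k => (hresn k).1.trans (hfnφ k)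
  set Ks : ℝ := ∑ i, K i + Kn with hKs
  have hKs0 : 0 ≤ Ks := add_nonneg (Finset.sum_nonneg fun i _ => hK0 i) hKn0
  have hKKs : ∀ i, K i ≤ Ks := fun i =>
    (Finset.single_le_sum (fun j _ => hK0 j) (Finset.mem_univ i)).trans
      (le_add_of_nonneg_right hKn0)
  have hKnKs : Kn ≤ Ks := le_add_of_nonneg_left (Finset.sum_nonneg fun i _ => hK0 i)
  set Q : ℕ → ℝ := fun k => Ks * (φ k * (1 + φ k)) with hQ
  have hle : ∀ k {κ t : ℝ}, κ ≤ Ks → 0 ≤ t → t ≤ φ k → κ * (t * (1 + t)) ≤ Q k :=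
    fun k κ t h1 h2 h3 => by
      have := hφ0 k
      simp only [hQ]
      gcongr
  have hxQ : ∀ k i, ‖x k i - G i (z k)‖ ^ 2 ≤ Q k := fun k i =>
    (hres k i).2.1.trans (hle k (hKKs i) (hres k i).1 (hfφ k i))
  have hyQ : ∀ k i, ‖y k i - w k i‖ ^ 2 ≤ Q k := fun k i =>
    (hres k i).2.2.trans (hle k (hKKs i) (hres k i).1 (hfφ k i))
  have hxnQ : ∀ k, ‖xn k - z k‖ ^ 2 ≤ Q k := fun k =>
    (hresn k).2.1.trans (hle k hKnKs (hresn k).1 (hfnφ k))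
  have hynQ : ∀ k, ‖yn k - wn k‖ ^ 2 ≤ Q k := fun k =>
    (hresn k).2.2.trans (hle k hKnKs (hresn k).1 (hfnφ k))
  set M : ℝ := γ⁻¹ * (∑ i, ‖G i‖ + 1) ^ 2 + ∑ i, (1 + ‖G i‖) ^ 2 with hM
  have hπQ : ∀ k, π k ≤ M * Ks * (φ k * (1 + φ k)) := fun k => by
    rw [hπ, hv, mul_assoc]
    simp only [hu]
    exact separator_gradient_norm_le G hγ (hxQ k) (hyQ k) (hxnQ k) (hynQ k)
  set S : H0 → (∀ i, E i) → Prop := fun zs ws =>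
    (∀ i, ws i - B i (G i zs) - C i (G i zs) - D i (G i zs) ∈ A i (G i zs)) ∧
      (-∑ i, ContinuousLinearMap.adjoint (G i) (ws i)) - Bn zs - Cn zs - Dn zs ∈ An zs with hSdef
  have hsep : ∀ zs ws, S zs ws → ∀ k,
      φ k ≤ ⟪z k - zs, v k⟫ + ∑ i, ⟪w k i - ws i, u k i⟫ := fun zs ws hs k => by
    have h1 := separator_eq_sum G zs (xn k) (yn k) ws (x k) (y k)
      (fun i => 1 / (4 * β i) * ‖x k i - G i (z k)‖ ^ 2) (1 / (4 * βn) * ‖xn k - z k‖ ^ 2)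
    have h2 : ∑ i, (⟪G i zs - x k i, y k i - ws i⟫ -
        1 / (4 * β i) * ‖x k i - G i (z k)‖ ^ 2) ≤ 0 := Finset.sum_nonpos fun i _ =>
      sub_nonpos.2 (inner_sub_le_of_forward_mem (hAmono i) (hBmono i) (hβ i) (hC i) (hDmono i)
        (hy' k i) (hs.1 i))
    have h3 := inner_sub_le_of_forward_mem hAnmono hBnmono hβn hCn hDnmono (hyn' k) hs.2
    have h4 := hφ k
    rw [← hv] at h1
    simp only [← hu] at h1
    have h5 : ∑ i, ⟪w k i - ws i, u k i⟫ = ∑ i, ⟪w k i, u k i⟫ - ∑ i, ⟪ws i, u k i⟫ := by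
      rw [← Finset.sum_sub_distrib]
      exact Finset.sum_congr rfl fun i _ => inner_sub_left _ _ _
    rw [inner_sub_left, h5]
    linarith
  have hM0 : 0 ≤ M := by positivity
  obtain ⟨hanti, ⟨R, hzR, hwR⟩, hφlim⟩ := fejer_of_separating_projections hγ hτ0 hτ2
    (mul_nonneg hM0 hKs0) (S := S) hS hπ hφ0 hπQ hsep hupdate
  have hQlim : Tendsto Q atTop (nhds 0) := by
    simpa using (hφlim.mul (hφlim.const_add 1)).const_mul Ks
  have hx0 := fun i => tendsto_norm_zero_of_sq_le hQlim fun k => hxQ k i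
  have hy0 := fun i => tendsto_norm_zero_of_sq_le hQlim fun k => hyQ k i
  have hxn0 := tendsto_norm_zero_of_sq_le hQlim hxnQ
  have hyn0 := tendsto_norm_zero_of_sq_le hQlim hynQ
  obtain ⟨zbar, wbar, hsbar, hzbar, hwbar⟩ := exists_weakTendsto_of_fejer hγ
    hzR hwR hanti fun U hU z₀ w₀ hz₀ hw₀ => mem_of_weakTendsto_of_residuals G
      (T := fun i a => {b | b - B i a - C i a - D i a ∈ A i a})
      (Tn := fun a => {b | b - Bn a - Cn a - Dn a ∈ An a})
      (fun i _ _ _ _ h1 h2 => inner_nonneg_of_forward_mem (hAmono i) (hBmono i) (hβ i) (hC i)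
        (hDmono i) h1 h2)
      (fun _ _ _ _ h1 h2 => inner_nonneg_of_forward_mem hAnmono hBnmono hβn hCn hDnmono h1 h2)
      (fun i => exists_forward_mem (hAmono i) (hAmax i) (hBlip i) (hβ i) (hC i) (hD i) (hmc i)
        (hDlip i))
      (exists_forward_mem hAnmono hAnmax hBnlip hβn hCn hDn hmcn hDnlip) hz₀ hw₀
      hzR hwR
      (x := x) (xn := xn) (y := fun k i => y k i + C i (x k i) - C i (G i (z k)))
      (yn := fun k => yn k + Cn (xn k) - Cn (z k))
      (fun k i => by
        rw [Set.mem_ofPred_eq]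
        convert hy' k i using 1
        abel)
      (fun k => by
        rw [Set.mem_ofPred_eq]
        convert hyn' k using 1
        abel)
      (fun i => (hx0 i).mono_left hU)
      (fun i => (tendsto_norm_forward_sub (hβ i) (hC i) (hx0 i) (hy0 i)).mono_left hU)
      (hxn0.mono_left hU) ((tendsto_norm_forward_sub hβn hCn hxn0 hyn0).mono_left hU)
  have hwnbar := WeakTendsto.neg_sum_adjoint G hwbar
  exact ⟨zbar, wbar, hzbar, hwbar, hwnbar, hsbar.1, hsbar.2,
    fun i => (hzbar.clm_apply (G i)).add_of_tendsto_norm_sub (hx0 i),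
    hzbar.add_of_tendsto_norm_sub hxn0, fun i => (hwbar i).add_of_tendsto_norm_sub (hy0 i),
    hwnbar.add_of_tendsto_norm_sub hyn0⟩
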